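/- arXiv:2105.12199 — 2 statements merged into one kernel-verified Lean document; each statement's English description precedes it below -/
import Mathlib

section
/- Let A be a *-algebra. The Lebesgue decomposition of representable positive functionals over A is unique if and only if every topologically irreducible *-representation of A on a Hilbert space is finite dimensional (i.e. its Hilbert space is finite dimensional). -/
open scoped ComplexOrder InnerProductSpace

section StarAlgebraDefs

variable {A : Type} [NonUnitalRing A] [Module ℂ A] [SMulCommClass ℂ A A]
  [IsScalarTower ℂ A A] [StarRing A] [StarModule ℂ A]

/-- A linear functional on a `⋆`-algebra is positive if `0 ≤ f (a⋆ * a)` for every `a`. -/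
def IsPosFn (f : A →ₗ[ℂ] ℂ) : Prop := ∀ a : A, 0 ≤ f (star a * a)

/-- Order on positive functionals: `f ≤ g` iff `g - f` is positive. -/
def FnLE (f g : A →ₗ[ℂ] ℂ) : Prop := IsPosFn (g - f)

/-- `f` is induced by a `⋆`-representation on the Hilbert space `H` with a cyclic vector. -/
def IsRepOn (f : A →ₗ[ℂ] ℂ) (H : Type) [NormedAddCommGroup H]
    [InnerProductSpace ℂ H] [CompleteSpace H] : Prop :=
  ∃ (π : A →⋆ₙₐ[ℂ] (H →L[ℂ] H)) (ξ : H),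
    DenseRange (fun a : A => π a ξ) ∧ ∀ a : A, f a = ⟪ξ, π a ξ⟫_ℂ

/-- A positive linear functional is representable if it is induced by a cyclic
`⋆`-representation on some complex Hilbert space. -/
def IsRepresentable (f : A →ₗ[ℂ] ℂ) : Prop :=
  ∃ (H : Type) (_ : NormedAddCommGroup H) (_ : InnerProductSpace ℂ H) (_ : CompleteSpace H),
    IsRepOn f H

/-- Absolute continuity `f ≪ g` for representable positive functionals: `f` is the pointwise
limit of an increasing sequence of representable positive functionals `fₙ` with
`fₙ ≤ αₙ • g` for some positive reals `αₙ`. -/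
def AbsContR (f g : A →ₗ[ℂ] ℂ) : Prop :=
  ∃ (fn : ℕ → (A →ₗ[ℂ] ℂ)) (α : ℕ → ℝ),
    (∀ n, IsRepresentable (fn n) ∧ IsPosFn (fn n)) ∧
    (∀ n, 0 < α n) ∧
    (∀ n, FnLE (fn n) (fn (n + 1))) ∧
    (∀ n, FnLE (fn n) (((α n : ℂ)) • g)) ∧
    (∀ a : A, Filter.Tendsto (fun n => fn n a) Filter.atTop (nhds (f a)))

/-- Singularity `f ⊥ g` for representable positive functionals: the only representable
positive functional dominated by both `f` and `g` is `0`. -/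
def SingularR (f g : A →ₗ[ℂ] ℂ) : Prop :=
  ∀ p : A →ₗ[ℂ] ℂ, IsRepresentable p → IsPosFn p → FnLE p f → FnLE p g → p = 0

/-- `f = fr + fs` is a Lebesgue decomposition of `f` with respect to `g` (representable
positive functionals). -/
def IsLebDecompR (f g fr fs : A →ₗ[ℂ] ℂ) : Prop :=
  IsRepresentable fr ∧ IsPosFn fr ∧ IsRepresentable fs ∧ IsPosFn fs ∧
    f = fr + fs ∧ AbsContR fr g ∧ SingularR fs g

/-- The Lebesgue decomposition of `f` with respect to `g` is unique. -/
def LebDecompUniqueForR (f g : A →ₗ[ℂ] ℂ) : Prop :=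
  ∀ fr fs fr' fs' : A →ₗ[ℂ] ℂ, IsLebDecompR f g fr fs → IsLebDecompR f g fr' fs' →
    fr = fr' ∧ fs = fs'

end StarAlgebraDefs

/-- The Lebesgue decomposition of representable positive functionals over `A` is unique. -/
def LebDecompUniqueR (A : Type) [NonUnitalRing A] [Module ℂ A] [SMulCommClass ℂ A A]
    [IsScalarTower ℂ A A] [StarRing A] [StarModule ℂ A] : Prop :=
  ∀ f g : A →ₗ[ℂ] ℂ, IsRepresentable f → IsPosFn f → IsRepresentable g → IsPosFn g →
    LebDecompUniqueForR f g

/-- A `⋆`-representation `π` of `A` on a complex Hilbert space `H` is topologically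
irreducible if `H ≠ {0}` and the only closed `π`-invariant subspaces of `H` are `{0}`
and `H`. -/
def IsTopIrredRep {A : Type} [NonUnitalRing A] [Module ℂ A] [StarRing A]
    {H : Type} [NormedAddCommGroup H] [InnerProductSpace ℂ H] [CompleteSpace H]
    (π : A →⋆ₙₐ[ℂ] (H →L[ℂ] H)) : Prop :=
  Nontrivial H ∧
    ∀ S : Submodule ℂ H, IsClosed (S : Set H) →
      (∀ a : A, ∀ x ∈ S, π a x ∈ S) → S = ⊥ ∨ S = ⊤

/-!
Realise `f` and `g` by cyclic vectors `ξ` and `η`. The limits `m` of sequences `π_f(aₙ) ξ` with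
`π_g(aₙ) η → 0` form a closed invariant subspace, and projecting `ξ` off it gives the largest
absolutely continuous part of `f`. If some Lebesgue decomposition has a smaller first summand, the
difference is a functional `p ≠ 0` which is singular to `g` and yet dominated by a functional
closable with respect to `g`. Singularity makes the pair of orbits of `p` and `g` jointly dense, and
closability then allows one to build vectors on which algebra elements act, up to arbitrarily small
errors, as matrix units of unbounded size; a pure state of the C⋆-algebra generated carries them to
an irreducible representation, which therefore cannot be finite dimensional.

Conversely, let `π` be irreducible on an infinite dimensional space with orthonormal sequence `eₙ`.
In the countable multiple of `π`, the vector `(4⁻ⁿ eₙ)` defines `g` and `(2⁻ⁿ eₙ)` defines `k ≪ g`.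
By Schur's lemma the functional `h` of `∑ 4⁻ⁿ eₙ` is singular to `g`, while `k + h ≪ g`; so `k + h`
has the two decompositions `(k, h)` and `(k + h, 0)`.
-/

noncomputable section

section Representation

variable {A H K : Type*} [NonUnitalRing A] [Module ℂ A] [StarRing A]
  [NormedAddCommGroup H] [InnerProductSpace ℂ H] [CompleteSpace H]
  [NormedAddCommGroup K] [InnerProductSpace ℂ K] [CompleteSpace K]

section Single

variable (π : A →⋆ₙₐ[ℂ] (H →L[ℂ] H))

theorem rep_inner_left (a : A) (x y : H) : ⟪π a x, y⟫_ℂ = ⟪x, π (star a) y⟫_ℂ := by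
  rw [map_star, ContinuousLinearMap.star_eq_adjoint, ContinuousLinearMap.adjoint_inner_right]

theorem rep_inner_right (a : A) (x y : H) : ⟪x, π a y⟫_ℂ = ⟪π (star a) x, y⟫_ℂ := by
  rw [rep_inner_left, star_star]

theorem rep_mul_apply (a b : A) (x : H) : π (a * b) x = π a (π b x) := by
  rw [map_mul, mul_apply_eq_comp]

/-- The orbit map `a ↦ π a v` of a vector; `v` is cyclic for `π` when it has dense range. -/
@[simps]
def orbit (v : H) : A →ₗ[ℂ] H where
  toFun a := π a v
  map_add' a b := by simp
  map_smul' c a := by simp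

/-- The functional `a ↦ ⟨π(a)v, v⟩` of a vector (Mathlib's inner product is linear in its second
argument). -/
@[simps]
def vecFn (v : H) : A →ₗ[ℂ] ℂ where
  toFun a := ⟪v, π a v⟫_ℂ
  map_add' a b := by simp
  map_smul' c a := by simp

variable {π}

theorem vecFn_star_mul (v : H) (a b : A) : vecFn π v (star a * b) = ⟪π a v, π b v⟫_ℂ := by
  rw [vecFn_apply, rep_mul_apply, rep_inner_left]

theorem vecFn_star_mul_self (v : H) (a : A) : vecFn π v (star a * a) = (‖π a v‖ ^ 2 : ℝ) := by
  rw [vecFn_star_mul, inner_self_eq_norm_sq_to_K, Complex.ofReal_pow]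
  rfl

theorem ofReal_re_vecFn_star_mul_self (v : H) (a : A) :
    ENNReal.ofReal (vecFn π v (star a * a)).re = ‖π a v‖ₑ ^ 2 := by
  rw [vecFn_star_mul_self, Complex.ofReal_re, ENNReal.ofReal_pow (norm_nonneg _), ofReal_norm]

theorem vecFn_eq_zero_iff {v : H} : vecFn π v = 0 ↔ ∀ a, π a v = 0 := by
  refine ⟨fun h a ↦ ?_, fun h ↦ LinearMap.ext fun a ↦ by simp [h a]⟩
  have := vecFn_star_mul_self (π := π) v a
  simpa [h] using this.symm

theorem vecFn_smul (c : ℝ) (v : H) :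
    vecFn π ((c : ℂ) • v) = ((c ^ 2 : ℝ) : ℂ) • vecFn π v := by
  ext a
  simp only [vecFn_apply, map_smul, inner_smul_left, inner_smul_right, Complex.conj_ofReal,
    LinearMap.smul_apply, smul_eq_mul, Complex.ofReal_pow]
  ring

theorem eq_of_rep_eq {u : H} (hu : DenseRange (orbit π u)) {x y : H} (h : ∀ a, π a x = π a y) :
    x = y := by
  rw [← sub_eq_zero]
  refine hu.eq_zero_of_inner_left (𝕜 := ℂ) fun a ↦ ?_
  rw [orbit_apply, rep_inner_right, map_sub, h, sub_self, inner_zero_left]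

variable (π) in
/-- `S` is invariant under the representation `π`. -/
def IsRepInvariant (S : Submodule ℂ H) : Prop := ∀ a, ∀ x ∈ S, π a x ∈ S

variable {S : Submodule ℂ H}

theorem IsRepInvariant.orthogonal (hS : IsRepInvariant π S) : IsRepInvariant π Sᗮ := by
  intro a x hx
  rw [Submodule.mem_orthogonal] at hx ⊢
  intro u hu
  rw [rep_inner_right]
  exact hx _ (hS _ _ hu)

theorem IsRepInvariant.vecFn_add (hS : IsRepInvariant π S) {p q : H} (hp : p ∈ S) (hq : q ∈ Sᗮ) :
    vecFn π (p + q) = vecFn π p + vecFn π q := by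
  ext a
  have hpq : ⟪p, π a q⟫_ℂ = 0 := hS.orthogonal a q hq p hp
  have hqp : ⟪q, π a p⟫_ℂ = 0 := (Submodule.mem_orthogonal' _ _).1 hq _ (hS a p hp)
  simp only [LinearMap.add_apply, vecFn_apply, map_add, inner_add_left, inner_add_right, hpq, hqp,
    zero_add, add_zero]

/-- The restriction of a representation to a closed invariant subspace. -/
def subRep [CompleteSpace S] (hS : IsRepInvariant π S) : A →⋆ₙₐ[ℂ] (S →L[ℂ] S) where
  toFun a := (π a).restrict (hS a)
  map_smul' c a := by ext x; simp
  map_zero' := by ext x; simp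
  map_add' a b := by ext x; simp
  map_mul' a b := by ext x; simp
  map_star' a := by
    rw [ContinuousLinearMap.star_eq_adjoint, ContinuousLinearMap.eq_adjoint_iff]
    intro x y
    simp [Submodule.coe_inner, rep_inner_left]

end Single

section Intertwiner

variable {L : Type*} [NormedAddCommGroup L] [InnerProductSpace ℂ L] [CompleteSpace L]
  {π : A →⋆ₙₐ[ℂ] (H →L[ℂ] H)} {σ : A →⋆ₙₐ[ℂ] (K →L[ℂ] K)} {τ : A →⋆ₙₐ[ℂ] (L →L[ℂ] L)}

/-- `T` intertwines the representations `π` and `σ`. -/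
def Intertwines (T : H →L[ℂ] K) (π : A →⋆ₙₐ[ℂ] (H →L[ℂ] H)) (σ : A →⋆ₙₐ[ℂ] (K →L[ℂ] K)) : Prop :=
  ∀ a x, T (π a x) = σ a (T x)

theorem Intertwines.comp {T : K →L[ℂ] L} {R : H →L[ℂ] K} (hT : Intertwines T σ τ)
    (hR : Intertwines R π σ) : Intertwines (T ∘L R) π τ := fun a x ↦ by
  rw [ContinuousLinearMap.comp_apply, hR, hT, ContinuousLinearMap.comp_apply]

theorem Intertwines.adjoint {T : H →L[ℂ] K} (hT : Intertwines T π σ) :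
    Intertwines (ContinuousLinearMap.adjoint T) σ π := fun a y ↦ by
  refine ext_inner_left ℂ fun x ↦ ?_
  rw [ContinuousLinearMap.adjoint_inner_right, rep_inner_right, ← hT, rep_inner_right,
    ContinuousLinearMap.adjoint_inner_right]

theorem IsRepInvariant.intertwines_starProjection {S : Submodule ℂ H} [S.HasOrthogonalProjection]
    (hS : IsRepInvariant π S) : Intertwines S.starProjection π π := fun a x ↦ by
  refine Submodule.eq_starProjection_of_mem_orthogonal
    (hS a _ (Submodule.starProjection_apply_mem _ _)) ?_
  rw [← map_sub]
  exact hS.orthogonal a _ (Submodule.sub_starProjection_mem_orthogonal x)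

end Intertwiner

section Cyclic

variable (π : A →⋆ₙₐ[ℂ] (H →L[ℂ] H)) (v : H)

/-- The closed cyclic subspace generated by a vector. -/
def cyclicSubspace : Submodule ℂ H := (LinearMap.range (orbit π v)).topologicalClosure

theorem isClosed_cyclicSubspace : IsClosed (cyclicSubspace π v : Set H) :=
  Submodule.isClosed_topologicalClosure _

instance : CompleteSpace (cyclicSubspace π v) :=
  (isClosed_cyclicSubspace π v).completeSpace_coe

variable {π v}

theorem rep_mem_cyclicSubspace (a : A) : π a v ∈ cyclicSubspace π v :=
  Submodule.le_topologicalClosure _ ⟨a, rfl⟩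

theorem mem_of_mem_cyclicSubspace {C : Set H} (hC : IsClosed C) (h : ∀ a, π a v ∈ C) {x : H}
    (hx : x ∈ cyclicSubspace π v) : x ∈ C :=
  closure_minimal (Set.range_subset_iff.2 h) hC hx

theorem isRepInvariant_cyclicSubspace : IsRepInvariant π (cyclicSubspace π v) := fun a x hx ↦ by
  refine mem_of_mem_cyclicSubspace ((isClosed_cyclicSubspace π v).preimage (π a).continuous)
    (fun b ↦ ?_) hx
  rw [Set.mem_preimage, ← rep_mul_apply]
  exact rep_mem_cyclicSubspace _

theorem cyclicSubspace_eq_top_iff : cyclicSubspace π v = ⊤ ↔ DenseRange (orbit π v) :=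
  Submodule.dense_iff_topologicalClosure_eq_top.symm

theorem denseRange_orbit_cyclicSubspace :
    DenseRange ((orbit π v).codRestrict (cyclicSubspace π v) rep_mem_cyclicSubspace) := by
  intro x
  rw [Topology.IsInducing.subtypeVal.closure_eq_preimage_closure_image, ← Set.range_comp]
  exact x.2

theorem rep_starProjection_cyclicSubspace (a : A) :
    π a ((cyclicSubspace π v).starProjection v) = π a v := by
  rw [← isRepInvariant_cyclicSubspace.intertwines_starProjection,
    Submodule.starProjection_eq_self_iff.2 (rep_mem_cyclicSubspace a)]

theorem vecFn_starProjection_cyclicSubspace :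
    vecFn π ((cyclicSubspace π v).starProjection v) = vecFn π v := by
  ext a
  rw [vecFn_apply, rep_starProjection_cyclicSubspace,
    Submodule.inner_starProjection_left_eq_right,
    Submodule.starProjection_eq_self_iff.2 (rep_mem_cyclicSubspace a), vecFn_apply]

/-- A domination `‖σ a u‖ ≤ ‖π a v‖` of orbits is implemented by a contraction, which vanishes on
the complement of the cyclic subspace of `v`. -/
theorem exists_intertwiner {σ : A →⋆ₙₐ[ℂ] (K →L[ℂ] K)} {u : K} (hu : DenseRange (orbit σ u))
    (h : ∀ a, ‖σ a u‖ ≤ ‖π a v‖) :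
    ∃ J : H →L[ℂ] K, Intertwines J π σ ∧ J v = u ∧ ‖J‖ ≤ 1 := by
  set M := cyclicSubspace π v
  let e : A →ₗ[ℂ] M := (orbit π v).codRestrict M rep_mem_cyclicSubspace
  have he : DenseRange e := denseRange_orbit_cyclicSubspace
  have hbound : ∀ a, ‖orbit σ u a‖ ≤ 1 * ‖e a‖ := fun a ↦ (h a).trans_eq (one_mul _).symm
  let J₀ : M →L[ℂ] K := (orbit σ u).extendOfNorm e
  have hJ₀ : ∀ a, J₀ (e a) = σ a u := LinearMap.extendOfNorm_eq he ⟨1, hbound⟩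
  have hJ₀_comm : ∀ a (x : M), J₀ (subRep isRepInvariant_cyclicSubspace a x) = σ a (J₀ x) := by
    intro a x
    refine he.induction_on (p := fun x ↦ J₀ (subRep _ a x) = σ a (J₀ x)) x
      (isClosed_eq (by fun_prop) (by fun_prop)) fun b ↦ ?_
    have : subRep isRepInvariant_cyclicSubspace a (e b) = e (a * b) :=
      Subtype.ext (rep_mul_apply π a b v).symm
    rw [this, hJ₀, hJ₀, rep_mul_apply]
  let J : H →L[ℂ] K := J₀ ∘L M.orthogonalProjectionOnto
  have hJ : Intertwines J π σ := fun a x ↦ by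
    have : M.orthogonalProjectionOnto (π a x) =
        subRep isRepInvariant_cyclicSubspace a (M.orthogonalProjectionOnto x) :=
      Subtype.ext (isRepInvariant_cyclicSubspace.intertwines_starProjection a x)
    exact (congrArg J₀ this).trans (hJ₀_comm a _)
  refine ⟨J, hJ, eq_of_rep_eq hu fun a ↦ ?_, ?_⟩
  · rw [← hJ, ← hJ₀]
    exact congrArg J₀ (Submodule.orthogonalProjectionOnto_mem_subspace_eq_self (e a))
  · refine (ContinuousLinearMap.opNorm_comp_le _ _).trans (mul_le_one₀ ?_ (norm_nonneg _) ?_)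
    · exact LinearMap.opNorm_extendOfNorm_le he zero_le_one hbound
    · exact M.orthogonalProjectionOnto_norm_le

end Cyclic

end Representation

section Functional

variable {A : Type} [NonUnitalRing A] [Module ℂ A] [StarRing A]
  {H K L : Type*} [NormedAddCommGroup H] [InnerProductSpace ℂ H] [CompleteSpace H]
  [NormedAddCommGroup K] [InnerProductSpace ℂ K] [CompleteSpace K]
  [NormedAddCommGroup L] [InnerProductSpace ℂ L] [CompleteSpace L]
  {π : A →⋆ₙₐ[ℂ] (H →L[ℂ] H)} {σ : A →⋆ₙₐ[ℂ] (K →L[ℂ] K)} {τ : A →⋆ₙₐ[ℂ] (L →L[ℂ] L)}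

theorem FnLE.add_right (f : A →ₗ[ℂ] ℂ) {g : A →ₗ[ℂ] ℂ} (hg : IsPosFn g) : FnLE f (f + g) := by
  rwa [FnLE, add_sub_cancel_left]

theorem FnLE.trans {f g h : A →ₗ[ℂ] ℂ} (hfg : FnLE f g) (hgh : FnLE g h) : FnLE f h := fun a ↦ by
  simpa using add_nonneg (hfg a) (hgh a)

theorem isPosFn_vecFn (v : H) : IsPosFn (vecFn π v) := fun a ↦ by
  rw [vecFn_star_mul_self, Complex.zero_le_real]
  positivity

theorem vecFn_fnLE_smul_iff {u : K} {v : H} {c : ℝ} :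
    FnLE (vecFn σ u) ((c : ℂ) • vecFn π v) ↔ ∀ a, ‖σ a u‖ ^ 2 ≤ c * ‖π a v‖ ^ 2 := by
  refine forall_congr' fun a ↦ ?_
  rw [LinearMap.sub_apply, LinearMap.smul_apply, vecFn_star_mul_self, vecFn_star_mul_self,
    smul_eq_mul, ← Complex.ofReal_mul, ← Complex.ofReal_sub, Complex.zero_le_real, sub_nonneg]

theorem vecFn_fnLE_iff {u : K} {v : H} :
    FnLE (vecFn σ u) (vecFn π v) ↔ ∀ a, ‖σ a u‖ ≤ ‖π a v‖ := by
  simpa [pow_le_pow_iff_left₀] using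
    vecFn_fnLE_smul_iff (π := π) (σ := σ) (u := u) (v := v) (c := 1)

theorem isRepresentable_vecFn {H : Type} [NormedAddCommGroup H] [InnerProductSpace ℂ H]
    [CompleteSpace H] (π : A →⋆ₙₐ[ℂ] (H →L[ℂ] H)) (v : H) : IsRepresentable (vecFn π v) := by
  let M := cyclicSubspace π v
  refine ⟨M, inferInstance, inferInstance, inferInstance, subRep isRepInvariant_cyclicSubspace,
    M.orthogonalProjectionOnto v, ?_, fun a ↦ ?_⟩
  · have : (fun a ↦ subRep isRepInvariant_cyclicSubspace a (M.orthogonalProjectionOnto v)) =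
        (orbit π v).codRestrict M rep_mem_cyclicSubspace :=
      funext fun a ↦ Subtype.ext (rep_starProjection_cyclicSubspace a)
    exact this ▸ denseRange_orbit_cyclicSubspace
  · rw [← vecFn_starProjection_cyclicSubspace]
    rfl

theorem IsRepresentable.exists_vecFn {f : A →ₗ[ℂ] ℂ} (hf : IsRepresentable f) :
    ∃ (H : Type) (_ : NormedAddCommGroup H) (_ : InnerProductSpace ℂ H) (_ : CompleteSpace H)
      (π : A →⋆ₙₐ[ℂ] (H →L[ℂ] H)) (ξ : H), DenseRange (orbit π ξ) ∧ f = vecFn π ξ := by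
  obtain ⟨H, _, _, _, π, ξ, hξ, hf⟩ := hf
  exact ⟨H, inferInstance, inferInstance, inferInstance, π, ξ, hξ, LinearMap.ext hf⟩

theorem IsRepresentable.isPosFn {f : A →ₗ[ℂ] ℂ} (hf : IsRepresentable f) : IsPosFn f := by
  obtain ⟨H, _, _, _, π, ξ, -, rfl⟩ := hf.exists_vecFn
  exact isPosFn_vecFn ξ

theorem isRepresentable_zero : IsRepresentable (0 : A →ₗ[ℂ] ℂ) := by
  convert isRepresentable_vecFn (0 : A →⋆ₙₐ[ℂ] (ℂ →L[ℂ] ℂ)) 0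
  exact (vecFn_eq_zero_iff.2 fun a ↦ map_zero _).symm

theorem IsRepresentable.smul {f : A →ₗ[ℂ] ℂ} (hf : IsRepresentable f) {c : ℝ} (hc : 0 ≤ c) :
    IsRepresentable ((c : ℂ) • f) := by
  obtain ⟨H, _, _, _, π, ξ, -, rfl⟩ := hf.exists_vecFn
  rw [← Real.sq_sqrt hc, ← vecFn_smul]
  exact isRepresentable_vecFn _ _

/-- If `f = f₁ + f₂` for functionals of cyclic vectors, the representation of `f` maps into those
of the summands by a pair of intertwiners that is jointly isometric. -/
theorem exists_intertwiners_of_vecFn_eq_add {ξ : H} {ξ₁ : K} {ξ₂ : L}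
    (hξ : DenseRange (orbit π ξ)) (hξ₁ : DenseRange (orbit σ ξ₁)) (hξ₂ : DenseRange (orbit τ ξ₂))
    (hadd : vecFn π ξ = vecFn σ ξ₁ + vecFn τ ξ₂) :
    ∃ (J : H →L[ℂ] K) (S : H →L[ℂ] L), Intertwines J π σ ∧ Intertwines S π τ ∧ J ξ = ξ₁ ∧
      S ξ = ξ₂ ∧ ∀ x y, ⟪J x, J y⟫_ℂ + ⟪S x, S y⟫_ℂ = ⟪x, y⟫_ℂ := by
  have hle₁ : FnLE (vecFn σ ξ₁) (vecFn π ξ) := hadd ▸ FnLE.add_right _ (isPosFn_vecFn ξ₂)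
  have hle₂ : FnLE (vecFn τ ξ₂) (vecFn π ξ) := by
    rw [hadd, add_comm]
    exact FnLE.add_right _ (isPosFn_vecFn ξ₁)
  obtain ⟨J, hJ, hJξ, -⟩ := exists_intertwiner hξ₁ (vecFn_fnLE_iff.1 hle₁)
  obtain ⟨S, hS, hSξ, -⟩ := exists_intertwiner hξ₂ (vecFn_fnLE_iff.1 hle₂)
  refine ⟨J, S, hJ, hS, hJξ, hSξ, fun x y ↦ ?_⟩
  refine hξ.induction_on₂ (p := fun x y ↦ ⟪J x, J y⟫_ℂ + ⟪S x, S y⟫_ℂ = ⟪x, y⟫_ℂ)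
    (isClosed_eq (by fun_prop) (by fun_prop)) (fun a b ↦ ?_) x y
  simp only [orbit_apply, hJ a, hJ b, hS a, hS b, hJξ, hSξ, ← vecFn_star_mul, hadd,
    LinearMap.add_apply]

end Functional

section DirectSum

open WithLp

variable {A G F X : Type*} [NonUnitalRing A] [Module ℂ A] [StarRing A]
  [NormedAddCommGroup G] [InnerProductSpace ℂ G] [NormedAddCommGroup F] [InnerProductSpace ℂ F]
  [NormedAddCommGroup X] [InnerProductSpace ℂ X]

/-- The isometric inclusion `x ↦ (x, 0)` into the Hilbert sum. -/
def inlL2 : G →L[ℂ] WithLp 2 (G × F) :=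
  (prodContinuousLinearEquiv 2 ℂ G F).symm ∘L ContinuousLinearMap.inl ℂ G F

/-- The isometric inclusion `y ↦ (0, y)` into the Hilbert sum. -/
def inrL2 : F →L[ℂ] WithLp 2 (G × F) :=
  (prodContinuousLinearEquiv 2 ℂ G F).symm ∘L ContinuousLinearMap.inr ℂ G F

@[simp] theorem inlL2_apply (x : G) : inlL2 (F := F) x = toLp 2 (x, 0) := rfl

/-- The direct sum of two operators on the Hilbert sum. -/
def prodMapL2 (S : G →L[ℂ] G) (T : F →L[ℂ] F) : WithLp 2 (G × F) →L[ℂ] WithLp 2 (G × F) :=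
  (prodContinuousLinearEquiv 2 ℂ G F).symm ∘L S.prodMap T ∘L prodContinuousLinearEquiv 2 ℂ G F

theorem prodMapL2_apply (S : G →L[ℂ] G) (T : F →L[ℂ] F) (w : WithLp 2 (G × F)) :
    prodMapL2 S T w = toLp 2 (S w.fst, T w.snd) := rfl

theorem denseRange_of_forall_inner_eq_zero [CompleteSpace F] {T : G →L[ℂ] F}
    (h : ∀ y, (∀ x, ⟪T x, y⟫_ℂ = 0) → y = 0) : DenseRange T := by
  change Dense (LinearMap.range (T : G →ₗ[ℂ] F) : Set F)
  rw [Submodule.dense_iff_topologicalClosure_eq_top, Submodule.topologicalClosure_eq_top_iff,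
    Submodule.eq_bot_iff]
  exact fun y hy ↦ h y fun x ↦ (Submodule.mem_orthogonal _ _).1 hy _ ⟨x, rfl⟩

/-- The adjoint of `x ↦ P (x, 0)`, for the projection `P` onto `Γ`, is the first coordinate of `Γ`,
which is injective when `Γ` is the graph of an operator. -/
theorem denseRange_orthogonalProjectionOnto_inlL2 {Γ : Submodule ℂ (WithLp 2 (G × F))}
    [CompleteSpace Γ] (hΓ : ∀ y : F, toLp 2 ((0 : G), y) ∈ Γ → y = 0) :
    DenseRange (Γ.orthogonalProjectionOnto ∘L inlL2) := by
  refine denseRange_of_forall_inner_eq_zero fun w hw ↦ ?_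
  have hfst : (w : WithLp 2 (G × F)).fst = 0 := by
    refine ext_inner_left ℂ fun x ↦ ?_
    have := hw x
    rw [ContinuousLinearMap.comp_apply, Submodule.coe_inner] at this
    simpa [Submodule.inner_starProjection_left_eq_right,
      Submodule.starProjection_eq_self_iff.2 w.2, prod_inner_apply] using this
  have hw' : (w : WithLp 2 (G × F)) = toLp 2 (0, (w : WithLp 2 (G × F)).snd) := by
    rw [← hfst]
    rfl
  refine Subtype.ext ?_
  rw [hw', hΓ _ (hw'.subst (motive := (· ∈ Γ)) w.2)]
  rfl

variable [CompleteSpace G] [CompleteSpace F] [CompleteSpace X]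

/-- The direct sum of two representations. -/
def prodRep (π : A →⋆ₙₐ[ℂ] (G →L[ℂ] G)) (σ : A →⋆ₙₐ[ℂ] (F →L[ℂ] F)) :
    A →⋆ₙₐ[ℂ] (WithLp 2 (G × F) →L[ℂ] WithLp 2 (G × F)) where
  toFun a := prodMapL2 (π a) (σ a)
  map_smul' c a := by ext x : 1; simp [prodMapL2_apply]; rfl
  map_zero' := by ext x : 1; simp [prodMapL2_apply]
  map_add' a b := by ext x : 1; simp [prodMapL2_apply]; rfl
  map_mul' a b := by ext x : 1; simp [prodMapL2_apply]
  map_star' a := by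
    rw [ContinuousLinearMap.star_eq_adjoint, ContinuousLinearMap.eq_adjoint_iff]
    intro x y
    simp [prodMapL2_apply, prod_inner_apply, rep_inner_left]

variable {π : A →⋆ₙₐ[ℂ] (G →L[ℂ] G)} {σ : A →⋆ₙₐ[ℂ] (F →L[ℂ] F)} {ρ : A →⋆ₙₐ[ℂ] (X →L[ℂ] X)}

@[simp]
theorem prodRep_apply (a : A) (w : WithLp 2 (G × F)) :
    prodRep π σ a w = toLp 2 (π a w.fst, σ a w.snd) := rfl

theorem vecFn_prodRep (η : G) (ξ : F) :
    vecFn (prodRep π σ) (toLp 2 (η, ξ)) = vecFn π η + vecFn σ ξ := rfl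

section MulPart

variable (π σ) (η : G) (ξ : F)

/-- The multivalued part of the closure of the relation `π a η ↦ σ a ξ`; this relation is the graph
of a closable operator when the multivalued part vanishes. -/
def mulPart : Submodule ℂ F :=
  (cyclicSubspace (prodRep π σ) (toLp 2 (η, ξ))).comap (inrL2 (G := G)).toLinearMap

theorem isClosed_mulPart : IsClosed (mulPart π σ η ξ : Set F) := by
  have h : IsClosed (cyclicSubspace (prodRep π σ) (toLp 2 (η, ξ)) : Set (WithLp 2 (G × F))) :=
    isClosed_cyclicSubspace _ _
  exact h.preimage inrL2.continuous

instance : CompleteSpace (mulPart π σ η ξ) := (isClosed_mulPart π σ η ξ).completeSpace_coe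

variable {π σ η ξ}

theorem mem_mulPart {m : F} :
    m ∈ mulPart π σ η ξ ↔ toLp 2 (0, m) ∈ cyclicSubspace (prodRep π σ) (toLp 2 (η, ξ)) := Iff.rfl

theorem isRepInvariant_mulPart : IsRepInvariant σ (mulPart π σ η ξ) := fun a m hm ↦ by
  simpa [mem_mulPart] using isRepInvariant_cyclicSubspace a _ (mem_mulPart.1 hm)

theorem Intertwines.map_mem_mulPart {J : F →L[ℂ] X} (hJ : Intertwines J σ ρ) {m : F}
    (hm : m ∈ mulPart π σ η ξ) : J m ∈ mulPart π ρ η (J ξ) := by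
  let Γ := cyclicSubspace (prodRep π ρ) (toLp 2 (η, J ξ))
  have hcl : IsClosed {w : WithLp 2 (G × F) | toLp 2 (w.fst, J w.snd) ∈ Γ} :=
    (isClosed_cyclicSubspace _ _).preimage
      (f := fun w : WithLp 2 (G × F) ↦ toLp 2 (w.fst, J w.snd)) (by fun_prop)
  refine mem_of_mem_cyclicSubspace hcl (fun a ↦ ?_) (mem_mulPart.1 hm)
  simpa [hJ a] using rep_mem_cyclicSubspace (π := prodRep π ρ) (v := toLp 2 (η, J ξ)) a

variable (π σ η ξ) in
/-- The component of `ξ` orthogonal to the multivalued part; its functional is the absolutely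
continuous part of `vecFn σ ξ` with respect to `vecFn π η`. -/
def regVec : F := (mulPart π σ η ξ)ᗮ.starProjection ξ

theorem mulPart_regVec : mulPart π σ η (regVec π σ η ξ) = ⊥ := by
  let M := mulPart π σ η ξ
  have hrep : ∀ a, σ a (regVec π σ η ξ) = Mᗮ.starProjection (σ a ξ) := fun a ↦
    (isRepInvariant_mulPart.orthogonal.intertwines_starProjection a ξ).symm
  have hle : cyclicSubspace (prodRep π σ) (toLp 2 (η, regVec π σ η ξ)) ≤
      cyclicSubspace (prodRep π σ) (toLp 2 (η, ξ)) := fun _ ↦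
    mem_of_mem_cyclicSubspace (isClosed_cyclicSubspace _ _) fun a ↦ by
      have hM : σ a ξ - Mᗮ.starProjection (σ a ξ) ∈ M := by
        rw [Submodule.starProjection_orthogonal_val, sub_sub_cancel]
        exact Submodule.starProjection_apply_mem _ _
      have := Submodule.sub_mem _ (rep_mem_cyclicSubspace (π := prodRep π σ) a) (mem_mulPart.1 hM)
      have heq : prodRep π σ a (toLp 2 (η, regVec π σ η ξ)) = prodRep π σ a (toLp 2 (η, ξ)) -
          toLp 2 (0, σ a ξ - Mᗮ.starProjection (σ a ξ)) := by
        simp only [prodRep_apply, toLp_fst, toLp_snd, hrep, ← toLp_sub, Prod.mk_sub_mk, sub_zero,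
          sub_sub_cancel]
      rwa [SetLike.mem_coe, heq]
  refine (Submodule.eq_bot_iff _).2 fun m hm ↦ ?_
  have horth : m ∈ Mᗮ :=
    mem_of_mem_cyclicSubspace (C := {w : WithLp 2 (G × F) | w.snd ∈ Mᗮ})
      (M.isClosed_orthogonal.preimage (sndL 2 ℂ G F).continuous)
      (fun a ↦ by simp only [Set.mem_ofPred_eq, prodRep_apply, toLp_snd, hrep,
        Submodule.starProjection_apply_mem])
      (mem_mulPart.1 hm)
  exact inner_self_eq_zero.1 ((Submodule.mem_orthogonal _ _).1 horth m (hle hm))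

end MulPart

theorem norm_sub_adjoint_apply_sq_le {J : F →L[ℂ] X} (hJ : ‖J‖ ≤ 1) (y : F) :
    ‖y - ContinuousLinearMap.adjoint J (J y)‖ ^ 2 ≤ ‖y‖ ^ 2 - ‖J y‖ ^ 2 := by
  have hinner : RCLike.re ⟪y, ContinuousLinearMap.adjoint J (J y)⟫_ℂ = ‖J y‖ ^ 2 := by
    rw [ContinuousLinearMap.adjoint_inner_right, inner_self_eq_norm_sq]
  have hnorm : ‖ContinuousLinearMap.adjoint J (J y)‖ ≤ ‖J y‖ :=
    (ContinuousLinearMap.adjoint J).le_of_opNorm_le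
      ((LinearIsometryEquiv.norm_map _ J).trans_le hJ) _ |>.trans_eq (one_mul _)
  rw [norm_sub_sq (𝕜 := ℂ), hinner]
  linarith [pow_le_pow_left₀ (norm_nonneg _) hnorm 2]

end DirectSum

section AbsoluteContinuity

open WithLp Filter Topology

variable {A : Type} [NonUnitalRing A] [Module ℂ A] [StarRing A]

theorem IsRepresentable.add {f g : A →ₗ[ℂ] ℂ} (hf : IsRepresentable f) (hg : IsRepresentable g) :
    IsRepresentable (f + g) := by
  obtain ⟨H, _, _, _, π, ξ, -, rfl⟩ := hf.exists_vecFn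
  obtain ⟨K, _, _, _, σ, η, -, rfl⟩ := hg.exists_vecFn
  rw [← vecFn_prodRep]
  exact isRepresentable_vecFn _ _

section Singular

variable {G F : Type} [NormedAddCommGroup G] [InnerProductSpace ℂ G] [CompleteSpace G]
  [NormedAddCommGroup F] [InnerProductSpace ℂ F] [CompleteSpace F]
  {π : A →⋆ₙₐ[ℂ] (G →L[ℂ] G)} {σ : A →⋆ₙₐ[ℂ] (F →L[ℂ] F)} {η : G} {θ : F}

theorem SingularR.toLp_mem_cyclicSubspace (h : SingularR (vecFn σ θ) (vecFn π η)) (a : A) :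
    toLp 2 (π a η, (0 : F)) ∈ cyclicSubspace (prodRep π σ) (toLp 2 (η, θ)) := by
  set Δ := cyclicSubspace (prodRep π σ) (toLp 2 (η, θ))
  let P := Δᗮ.starProjection
  have hP : Intertwines P (prodRep π σ) (prodRep π σ) :=
    isRepInvariant_cyclicSubspace.orthogonal.intertwines_starProjection
  have hrep : ∀ b, prodRep π σ b (P (toLp 2 (η, 0))) = P (toLp 2 (π b η, 0)) := fun b ↦ by
    simp [← hP b]
  have hneg : ∀ b, P (toLp 2 (π b η, 0)) = -P (toLp 2 (0, σ b θ)) := fun b ↦ by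
    rw [eq_neg_iff_add_eq_zero, ← map_add, ← toLp_add, Prod.mk_add_mk, zero_add, add_zero,
      Submodule.starProjection_apply_eq_zero_iff]
    exact Submodule.le_orthogonal_orthogonal _
      (rep_mem_cyclicSubspace (π := prodRep π σ) (v := toLp 2 (η, θ)) b)
  have hzero : vecFn (prodRep π σ) (P (toLp 2 (η, 0))) = 0 := by
    refine h _ (isRepresentable_vecFn _ _) (isPosFn_vecFn _) (vecFn_fnLE_iff.2 fun b ↦ ?_)
      (vecFn_fnLE_iff.2 fun b ↦ ?_)
    · rw [hrep, hneg, norm_neg, ← norm_toLp_snd 2 G F]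
      exact Submodule.norm_starProjection_apply_le _ _
    · rw [hrep, ← norm_toLp_fst 2 G F]
      exact Submodule.norm_starProjection_apply_le _ _
  have := vecFn_eq_zero_iff.1 hzero a
  rwa [hrep, Submodule.starProjection_apply_eq_zero_iff, Submodule.orthogonal_orthogonal] at this

theorem SingularR.denseRange_orbit_prodRep (h : SingularR (vecFn σ θ) (vecFn π η))
    (hη : DenseRange (orbit π η)) (hθ : DenseRange (orbit σ θ)) :
    DenseRange (orbit (prodRep π σ) (toLp 2 (η, θ))) := by
  rw [← cyclicSubspace_eq_top_iff, Submodule.eq_top_iff']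
  set Δ := cyclicSubspace (prodRep π σ) (toLp 2 (η, θ))
  have hcl : IsClosed (Δ : Set (WithLp 2 (G × F))) := isClosed_cyclicSubspace _ _
  have hfst : ∀ x : G, toLp 2 (x, (0 : F)) ∈ Δ := fun x ↦
    hη.induction_on (p := fun x ↦ toLp 2 (x, (0 : F)) ∈ Δ) x
      (hcl.preimage inlL2.continuous) h.toLp_mem_cyclicSubspace
  have hsnd : ∀ y : F, toLp 2 ((0 : G), y) ∈ Δ := fun y ↦ by
    refine hθ.induction_on (p := fun y ↦ toLp 2 ((0 : G), y) ∈ Δ) y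
      (hcl.preimage inrL2.continuous) fun a ↦ ?_
    have := Δ.sub_mem (rep_mem_cyclicSubspace a) (h.toLp_mem_cyclicSubspace a)
    simpa only [prodRep_apply, toLp_fst, toLp_snd, ← toLp_sub, Prod.mk_sub_mk, sub_self,
      sub_zero, orbit_apply] using this
  intro w
  convert Δ.add_mem (hfst w.fst) (hsnd w.snd)
  simp only [← toLp_add, Prod.mk_add_mk, add_zero, zero_add]
  rfl

end Singular

variable {G X : Type*} [NormedAddCommGroup G] [InnerProductSpace ℂ G] [CompleteSpace G]
  [NormedAddCommGroup X] [InnerProductSpace ℂ X] [CompleteSpace X]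
  {π : A →⋆ₙₐ[ℂ] (G →L[ℂ] G)} {ρ : A →⋆ₙₐ[ℂ] (X →L[ℂ] X)} {η : G} {κ : X}

theorem Intertwines.map_mulPart_eq_zero {K : Type*} [NormedAddCommGroup K] [InnerProductSpace ℂ K]
    [CompleteSpace K] {τ : A →⋆ₙₐ[ℂ] (K →L[ℂ] K)} {J : X →L[ℂ] K} (hJ : Intertwines J ρ τ) {α : ℝ}
    (hle : FnLE (vecFn τ (J κ)) ((α : ℂ) • vecFn π η)) {m : X} (hm : m ∈ mulPart π ρ η κ) :
    J m = 0 := by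
  have hcl : IsClosed {w : WithLp 2 (G × X) | ‖J w.snd‖ ^ 2 ≤ α * ‖w.fst‖ ^ 2} :=
    isClosed_le (by fun_prop) (by fun_prop)
  have hm' := mem_of_mem_cyclicSubspace hcl
    (fun a ↦ by simpa [hJ a] using vecFn_fnLE_smul_iff.1 hle a) (mem_mulPart.1 hm)
  simpa [sq_nonpos_iff] using hm'

theorem AbsContR.mulPart_eq_bot (h : AbsContR (vecFn ρ κ) (vecFn π η))
    (hκ : DenseRange (orbit ρ κ)) : mulPart π ρ η κ = ⊥ := by
  obtain ⟨f, α, hrep, -, hmono, hdom, hlim⟩ := h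
  choose K _ _ _ τ ν hν hf using fun n ↦ (hrep n).1.exists_vecFn
  simp only [hf] at hmono hdom hlim
  have hnorm_lim (b : A) : Tendsto (fun n ↦ ‖τ n b (ν n)‖ ^ 2) atTop (𝓝 (‖ρ b κ‖ ^ 2)) := by
    simpa only [vecFn_star_mul_self, Function.comp_def, Complex.ofReal_re] using
      (Complex.continuous_re.tendsto _).comp (hlim (star b * b))
  have hnorm_le (n : ℕ) (b : A) : ‖τ n b (ν n)‖ ≤ ‖ρ b κ‖ := by
    refine pow_le_pow_iff_left₀ (norm_nonneg _) (norm_nonneg _) two_ne_zero |>.1 ?_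
    refine (monotone_nat_of_le_succ fun k ↦ ?_).ge_of_tendsto (hnorm_lim b) n
    exact pow_le_pow_left₀ (norm_nonneg _) (vecFn_fnLE_iff.1 (hmono k) b) 2
  choose J hJ hJκ hJnorm using fun n ↦ exists_intertwiner (hν n) (hnorm_le n)
  refine (Submodule.eq_bot_iff _).2 fun m hm ↦ ?_
  have hJm (n : ℕ) : J n m = 0 :=
    (hJ n).map_mulPart_eq_zero ((congrArg (vecFn (τ n)) (hJκ n)).symm ▸ hdom n) hm
  refine hκ.eq_zero_of_inner_right (𝕜 := ℂ) fun b ↦ ?_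
  have hlim_sq : Tendsto (fun n ↦ ‖ρ b κ - (J n).adjoint (J n (ρ b κ))‖ ^ 2) atTop (𝓝 0) := by
    refine squeeze_zero (fun n ↦ sq_nonneg _)
      (fun n ↦ norm_sub_adjoint_apply_sq_le (hJnorm n) (ρ b κ)) ?_
    have := (hnorm_lim b).const_sub (‖ρ b κ‖ ^ 2)
    rw [sub_self] at this
    simpa only [hJ _ b, hJκ] using this
  have hlim_adj : Tendsto (fun n ↦ (J n).adjoint (J n (ρ b κ))) atTop (𝓝 (ρ b κ)) := by
    rw [tendsto_iff_norm_sub_tendsto_zero]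
    simpa [norm_sub_rev, Real.sqrt_sq (norm_nonneg _)] using hlim_sq.sqrt
  refine tendsto_nhds_unique (hlim_adj.inner (𝕜 := ℂ) tendsto_const_nhds) ?_
  simp [ContinuousLinearMap.adjoint_inner_left, hJm]

end AbsoluteContinuity

section JointlyCyclic

open WithLp

theorem denseRange_fin_iterate {G X : Type*} [TopologicalSpace G] [TopologicalSpace X] [Nonempty G]
    {T : G → G} {R : G → X} (hT : Continuous T) (hR : Continuous R)
    (h : DenseRange fun w ↦ (R w, T w)) (n : ℕ) :
    DenseRange fun (w : G) (i : Fin n) ↦ R (T^[i] w) := by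
  induction n with
  | zero => exact fun y ↦ subset_closure ⟨Classical.arbitrary G, Subsingleton.elim _ _⟩
  | succ n ih =>
    let F : G → Fin n → X := fun w i ↦ R (T^[i] w)
    have hF : Continuous F := continuous_pi fun i ↦ hR.comp (hT.iterate i)
    let cons : X × (Fin n → X) → Fin (n + 1) → X := fun p ↦ Fin.cons p.1 p.2
    have hcons_surj : cons.Surjective := fun y ↦ ⟨(y 0, Fin.tail y), Fin.cons_self_tail y⟩
    have hcons_cont : Continuous cons := by fun_prop
    have hdense := (hcons_surj.denseRange.comp (denseRange_id.prodMap ih) hcons_cont).comp h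
      (hcons_cont.comp (continuous_id.prodMap hF))
    convert hdense using 1
    refine funext fun w ↦ funext <| Fin.cases rfl fun j ↦ ?_
    simp only [Fin.val_succ, Function.iterate_succ_apply]
    rfl

variable {A : Type*} [NonUnitalRing A] [Module ℂ A] [StarRing A]

/-- A sequence of vectors is jointly cyclic if every finite initial segment of it is a cyclic
vector for the corresponding multiple of the representation. -/
def IsJointlyCyclic {X : Type*} [NormedAddCommGroup X] [InnerProductSpace ℂ X] [CompleteSpace X]
    (τ : A →⋆ₙₐ[ℂ] (X →L[ℂ] X)) (u : ℕ → X) : Prop :=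
  ∀ n, DenseRange fun (a : A) (i : Fin n) ↦ τ a (u i)

/-- With `Γ` the graph closure of the closable operator `π a η ↦ σ a ζ` and `q x` the projection of
`(x, 0)` onto it, singularity makes `x ↦ (S (q x).snd, (q x).fst)` have dense range; iterating its
second component and applying the first produces the sequence. -/
theorem exists_isJointlyCyclic {A : Type} [NonUnitalRing A] [Module ℂ A] [StarRing A] {G X : Type}
    {F : Type*} [NormedAddCommGroup G] [InnerProductSpace ℂ G] [CompleteSpace G]
    [NormedAddCommGroup F] [InnerProductSpace ℂ F] [CompleteSpace F] [NormedAddCommGroup X]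
    [InnerProductSpace ℂ X] [CompleteSpace X] {π : A →⋆ₙₐ[ℂ] (G →L[ℂ] G)}
    {σ : A →⋆ₙₐ[ℂ] (F →L[ℂ] F)} {τ : A →⋆ₙₐ[ℂ] (X →L[ℂ] X)} {η : G} {ζ : F} {S : F →L[ℂ] X}
    (hη : DenseRange (orbit π η)) (hclosable : mulPart π σ η ζ = ⊥) (hS : Intertwines S σ τ)
    (hSζ : DenseRange (orbit τ (S ζ))) (hsing : SingularR (vecFn τ (S ζ)) (vecFn π η)) :
    ∃ u, IsJointlyCyclic τ u := by
  let Γ := cyclicSubspace (prodRep π σ) (toLp 2 (η, ζ))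
  let q : G →L[ℂ] Γ := Γ.orthogonalProjectionOnto ∘L inlL2
  let T : G →L[ℂ] G := fstL 2 ℂ G F ∘L Γ.subtypeL ∘L q
  let R : G →L[ℂ] X := S ∘L sndL 2 ℂ G F ∘L Γ.subtypeL ∘L q
  have hq : ∀ a x, (q (π a x) : WithLp 2 (G × F)) = prodRep π σ a (q x) := fun a x ↦ by
    refine Eq.trans ?_ (isRepInvariant_cyclicSubspace.intertwines_starProjection a (toLp 2 (x, 0)))
    simp [q, Γ]
  have hT : ∀ (i : ℕ) a x, T^[i] (π a x) = π a (T^[i] x) := fun i a ↦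
    (show Function.Commute T (π a) from fun x ↦ congrArg WithLp.fst (hq a x)).iterate_left i
  have hR : Intertwines R π τ := fun a x ↦
    (congrArg (fun w ↦ S (WithLp.snd w)) (hq a x)).trans (hS _ _)
  have hdense_q : DenseRange q := denseRange_orthogonalProjectionOnto_inlL2 fun y hy ↦
    (Submodule.eq_bot_iff _).1 hclosable y hy
  have hdense_Γ : DenseRange fun w : Γ ↦ (S w.1.snd, w.1.fst) := by
    have hsurj : Function.Surjective fun w : WithLp 2 (G × X) ↦ (w.snd, w.fst) :=
      fun p ↦ ⟨toLp 2 (p.2, p.1), rfl⟩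
    refine (hsurj.denseRange.comp (hsing.denseRange_orbit_prodRep hη hSζ) (by fun_prop)).mono ?_
    rintro _ ⟨a, rfl⟩
    exact ⟨⟨_, rep_mem_cyclicSubspace a⟩, Prod.ext (hS a ζ) rfl⟩
  have hdense : DenseRange fun x ↦ (R x, T x) := hdense_Γ.comp hdense_q (by fun_prop)
  refine ⟨fun i ↦ R (T^[i] η), fun n ↦ ?_⟩
  have hcont : Continuous fun (w : G) (i : Fin n) ↦ R (T^[i] w) :=
    continuous_pi fun i ↦ R.continuous.comp (T.continuous.iterate i)
  convert (denseRange_fin_iterate T.continuous R.continuous hdense n).comp hη hcont using 1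
  exact funext fun a ↦ funext fun i ↦ by simp [hT, hR a]

end JointlyCyclic

section ExtremePoints

open scoped ENNReal

theorem exists_mem_extremePoints_apply_le {E : Type*} [AddCommGroup E] [Module ℝ E]
    [TopologicalSpace E] [T2Space E] [IsTopologicalAddGroup E] [ContinuousSMul ℝ E]
    [LocallyConvexSpace ℝ E] {s : Set E} {F : E → ℝ≥0∞} (hs : IsCompact s)
    (hF : LowerSemicontinuous F)
    (hconcave : ∀ x ∈ s, ∀ y ∈ s, ∀ a b : ℝ, 0 < a → 0 < b → a + b = 1 →
      ENNReal.ofReal a * F x + ENNReal.ofReal b * F y ≤ F (a • x + b • y)) {x : E} (hx : x ∈ s) :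
    ∃ y ∈ s.extremePoints ℝ, F y ≤ F x := by
  obtain ⟨m, hm, hmin⟩ :=
    LowerSemicontinuousOn.exists_isMinOn ⟨x, hx⟩ hs (hF.lowerSemicontinuousOn _)
  rw [isMinOn_iff] at hmin
  have hface : IsExtreme ℝ s (s ∩ F ⁻¹' Set.Iic (F m)) := by
    refine ⟨Set.inter_subset_left, fun y hy z hz w hw hyz ↦ ⟨hy, ?_⟩⟩
    obtain ⟨a, b, ha, hb, hab, rfl⟩ := hyz
    by_contra! hlt
    rw [Set.mem_preimage, Set.mem_Iic, not_le] at hlt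
    have htop : F m ≠ ⊤ := hlt.ne_top
    have ha' : ENNReal.ofReal a ≠ 0 := by simpa using ha
    refine absurd ((hconcave y hy z hz a b ha hb hab).trans hw.2) (not_le.2 ?_)
    calc F m = ENNReal.ofReal a * F m + ENNReal.ofReal b * F m := by
          rw [← add_mul, ← ENNReal.ofReal_add ha.le hb.le, hab, ENNReal.ofReal_one, one_mul]
      _ < ENNReal.ofReal a * F y + ENNReal.ofReal b * F z :=
          ENNReal.add_lt_add_of_lt_of_le (ENNReal.mul_ne_top ENNReal.ofReal_ne_top htop)
            (ENNReal.mul_lt_mul_right ha' ENNReal.ofReal_ne_top hlt) (by gcongr; exact hmin z hz)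
  obtain ⟨y, hy⟩ := (hs.inter_right (hF.isClosed_preimage (F m))).extremePoints_nonempty
    ⟨m, hm, le_refl (F m)⟩
  exact ⟨y, hface.extremePoints_subset_extremePoints hy, hy.1.2.trans (hmin x hx)⟩

end ExtremePoints

section States

open scoped ENNReal

/-- The states of a unital C⋆-algebra, encoded as a set of functions so that the weak-⋆ topology is
that of pointwise convergence. -/
def stateSpace (C : Type*) [CStarAlgebra C] : Set (C → ℂ) :=
  {φ | IsLinearMap ℂ φ ∧ φ 1 = 1 ∧ ∀ x, ‖φ x‖ ≤ ‖x‖ ∧ 0 ≤ φ (star x * x)}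

theorem isCompact_stateSpace (C : Type*) [CStarAlgebra C] : IsCompact (stateSpace C) := by
  have hlinear : IsClosed {φ : C → ℂ | IsLinearMap ℂ φ} := by
    convert LinearMap.isClosed_range_coe C ℂ (RingHom.id ℂ)
    ext φ
    exact ⟨fun h ↦ ⟨h.mk' _, rfl⟩, fun ⟨f, hf⟩ ↦ hf ▸ f.isLinear⟩
  refine (isCompact_univ_pi fun x : C ↦ isCompact_closedBall (0 : ℂ) ‖x‖).of_isClosed_subset ?_
    fun φ hφ x _ ↦ mem_closedBall_zero_iff.2 (hφ.2.2 x).1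
  refine hlinear.and <| (isClosed_eq (by fun_prop) (by fun_prop)).and ?_
  simp only [Set.ofPred_forall]
  exact isClosed_iInter fun x ↦ (isClosed_le (by fun_prop) (by fun_prop)).and
    (isClosed_le (by fun_prop) (by fun_prop))

variable {C : Type*} [CStarAlgebra C]

section VectorStates

variable {K : Type*} [NormedAddCommGroup K] [InnerProductSpace ℂ K] [CompleteSpace K]
  {Φ : C →⋆ₙₐ[ℂ] (K →L[ℂ] K)} {w : K}

theorem vecFn_mem_stateSpace (hΦ : Φ 1 = 1) (hw : ‖w‖ = 1) : ⇑(vecFn Φ w) ∈ stateSpace C := by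
  refine ⟨(vecFn Φ w).isLinear, ?_, fun x ↦ ⟨?_, ?_⟩⟩
  · rw [vecFn_apply, hΦ, one_apply_eq_self, inner_self_eq_norm_sq_to_K, hw]
    simp
  · calc ‖⟪w, Φ x w⟫_ℂ‖ ≤ ‖w‖ * ‖Φ x w‖ := norm_inner_le_norm _ _
      _ ≤ ‖Φ x‖ := by simpa [hw] using (Φ x).le_opNorm w
      _ ≤ ‖x‖ := NonUnitalStarAlgHom.norm_apply_le Φ x
  · rw [vecFn_star_mul_self]
    exact Complex.zero_le_real.2 (sq_nonneg _)

/-- If both components `p`, `q` of `w` were nonzero, the state of `w` would be a proper convex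
combination of the states of `p / ‖p‖` and `q / ‖q‖`. -/
theorem starProjection_eq_zero_or_eq_of_mem_extremePoints (hΦ : Φ 1 = 1) (hw : ‖w‖ = 1)
    (hcyc : DenseRange (orbit Φ w)) (hext : ⇑(vecFn Φ w) ∈ (stateSpace C).extremePoints ℝ)
    {S : Submodule ℂ K} [S.HasOrthogonalProjection] (hS : IsRepInvariant Φ S) :
    S.starProjection w = 0 ∨ S.starProjection w = w := by
  by_contra! h
  set p := S.starProjection w
  have hpS : p ∈ S := Submodule.starProjection_apply_mem _ _
  have hq : w - p ∈ Sᗮ := Submodule.sub_starProjection_mem_orthogonal w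
  have hdecomp : vecFn Φ w = vecFn Φ p + vecFn Φ (w - p) := by
    rw [← hS.vecFn_add hpS hq, add_sub_cancel]
  have hnormalize : ∀ {x : K}, x ≠ 0 → vecFn Φ x =
      ((‖x‖ ^ 2 : ℝ) : ℂ) • vecFn Φ ((‖x‖⁻¹ : ℂ) • x) := fun {x} hx ↦ by
    rw [← vecFn_smul, smul_inv_smul₀ (by simpa using hx)]
  have hstate : ∀ {x : K}, x ≠ 0 → ⇑(vecFn Φ ((‖x‖⁻¹ : ℂ) • x)) ∈ stateSpace C :=
    fun hx ↦ vecFn_mem_stateSpace hΦ (norm_smul_inv_norm hx)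
  have hnorm : ‖p‖ ^ 2 + ‖w - p‖ ^ 2 = 1 := by
    rw [← one_pow 2, ← hw, S.norm_sq_eq_add_norm_sq_starProjection w,
      Submodule.starProjection_orthogonal_val]
  have hq0 : w - p ≠ 0 := sub_ne_zero.2 (Ne.symm h.2)
  have hp_state : ⇑(vecFn Φ ((‖p‖⁻¹ : ℂ) • p)) = vecFn Φ w := by
    refine ((mem_extremePoints.1 hext).2 _ (hstate h.1) _ (hstate hq0)
      ⟨‖p‖ ^ 2, ‖w - p‖ ^ 2, by have := h.1; positivity, by positivity, hnorm, ?_⟩).1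
    rw [hdecomp, hnormalize h.1, hnormalize hq0]
    ext c
    simp
  have hpw : p = ((‖p‖ ^ 2 : ℝ) : ℂ) • w := by
    rw [← sub_eq_zero]
    refine hcyc.eq_zero_of_inner_left (𝕜 := ℂ) fun c ↦ ?_
    have hc : vecFn Φ p c = ((‖p‖ ^ 2 : ℝ) : ℂ) * vecFn Φ w c := by
      rw [hnormalize h.1, LinearMap.smul_apply, hp_state, smul_eq_mul]
    have hpc : ⟪p, Φ c w⟫_ℂ = ⟪p, Φ c p⟫_ℂ := by
      have hcross : ⟪p, Φ c (w - p)⟫_ℂ = 0 := hS.orthogonal c _ hq p hpS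
      simpa only [map_sub, inner_sub_right, sub_eq_zero] using hcross
    rw [orbit_apply, inner_sub_left, inner_smul_left, Complex.conj_ofReal, hpc, sub_eq_zero]
    exact hc
  refine h.2 (Submodule.starProjection_eq_self_iff.2 ?_)
  have hp2 : ((‖p‖ ^ 2 : ℝ) : ℂ) ≠ 0 := by simpa using h.1
  exact (S.smul_mem_iff hp2).1 (hpw ▸ hpS)

end VectorStates

theorem isTopIrredRep_of_mem_extremePoints {C K : Type} [CStarAlgebra C] [NormedAddCommGroup K]
    [InnerProductSpace ℂ K] [CompleteSpace K] {Φ : C →⋆ₙₐ[ℂ] (K →L[ℂ] K)} {w : K} (hΦ : Φ 1 = 1)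
    (hw : ‖w‖ = 1) (hcyc : DenseRange (orbit Φ w))
    (hext : ⇑(vecFn Φ w) ∈ (stateSpace C).extremePoints ℝ) : IsTopIrredRep Φ := by
  refine ⟨⟨w, 0, norm_ne_zero_iff.1 (hw ▸ one_ne_zero)⟩, fun S hS hinv ↦ ?_⟩
  have : CompleteSpace S := hS.completeSpace_coe
  refine (starProjection_eq_zero_or_eq_of_mem_extremePoints hΦ hw hcyc hext hinv).imp
    (fun h ↦ ?_) fun h ↦ ?_
  · have hzero : S.starProjection = 0 := by
      refine ContinuousLinearMap.coeFn_injective (hcyc.equalizer (by fun_prop) (by fun_prop) ?_)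
      funext c
      simp [IsRepInvariant.intertwines_starProjection hinv c w, h]
    rw [Submodule.eq_bot_iff]
    intro x hx
    rw [← Submodule.starProjection_eq_self_iff.2 hx, hzero, zero_apply]
  · have hwS : w ∈ S := Submodule.starProjection_eq_self_iff.1 h
    exact Submodule.eq_top_iff'.2 fun x ↦ hS.closure_subset_iff.2
      (Set.range_subset_iff.2 fun c ↦ hinv c w hwS) (hcyc x)

theorem exists_vecFn_eq_of_mem_stateSpace.{u} {C : Type u} [CStarAlgebra C] {φ : C → ℂ}
    (hφ : φ ∈ stateSpace C) :
    ∃ (K : Type u) (_ : NormedAddCommGroup K) (_ : InnerProductSpace ℂ K) (_ : CompleteSpace K)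
      (Φ : C →⋆ₙₐ[ℂ] (K →L[ℂ] K)) (w : K),
      Φ 1 = 1 ∧ ‖w‖ = 1 ∧ DenseRange (orbit Φ w) ∧ ⇑(vecFn Φ w) = φ := by
  let _ := CStarAlgebra.spectralOrder C
  let _ := CStarAlgebra.spectralOrderedRing C
  obtain ⟨hlinear, hone, hφ⟩ := hφ
  let f : C →ₚ[ℂ] ℂ := PositiveLinearMap.mk₀ hlinear.mk' fun x hx ↦ by
    obtain ⟨y, rfl⟩ := CStarAlgebra.nonneg_iff_eq_star_mul_self.1 hx
    exact (hφ y).2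
  let w : f.GNS := (f.toPreGNS 1 : f.PreGNS)
  have horbit : ∀ c, f.gnsNonUnitalStarAlgHom c w = (f.toPreGNS c : f.PreGNS) := fun c ↦ by
    rw [PositiveLinearMap.gnsNonUnitalStarAlgHom_apply_coe]
    simp
  have hvecFn : ⇑(vecFn f.gnsNonUnitalStarAlgHom w) = φ := by
    ext c
    rw [vecFn_apply, horbit, UniformSpace.Completion.inner_coe, PositiveLinearMap.preGNS_inner_def]
    simp only [PositiveLinearMap.ofPreGNS_toPreGNS, star_one, one_mul]
    rfl
  have hunit : f.gnsNonUnitalStarAlgHom 1 = 1 := map_one f.gnsStarAlgHom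
  refine ⟨f.GNS, inferInstance, inferInstance, inferInstance, f.gnsNonUnitalStarAlgHom, w, hunit,
    ?_, ?_, hvecFn⟩
  · have hw := congrFun hvecFn 1
    rw [hone, vecFn_apply, hunit, one_apply_eq_self] at hw
    rw [← pow_eq_one_iff_of_nonneg (norm_nonneg w) two_ne_zero,
      ← inner_self_eq_norm_sq (𝕜 := ℂ), hw, RCLike.one_re]
  · exact UniformSpace.Completion.denseRange_coe.mono <| Set.range_subset_iff.2 fun c ↦
      ⟨f.ofPreGNS c, horbit (f.ofPreGNS c)⟩

theorem exists_isTopIrredRep_tsum_le_of_cstarAlgebra {C : Type} {ι K : Type*} [CStarAlgebra C]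
    [NormedAddCommGroup K] [InnerProductSpace ℂ K] [CompleteSpace K] {Ψ : C →⋆ₙₐ[ℂ] (K →L[ℂ] K)}
    (hΨ : Ψ 1 = 1) {v : K} (hv : ‖v‖ = 1) (x : ι → C) :
    ∃ (L : Type) (_ : NormedAddCommGroup L) (_ : InnerProductSpace ℂ L) (_ : CompleteSpace L)
      (Φ : C →⋆ₙₐ[ℂ] (L →L[ℂ] L)) (w : L), IsTopIrredRep Φ ∧ Φ 1 = 1 ∧ ‖w‖ = 1 ∧
      ∑' i, ‖Φ (x i) w‖ₑ ^ 2 ≤ ∑' i, ‖Ψ (x i) v‖ₑ ^ 2 := by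
  let F : (C → ℂ) → ℝ≥0∞ := fun φ ↦ ∑' i, ENNReal.ofReal (φ (star (x i) * x i)).re
  have hlsc : LowerSemicontinuous F := lowerSemicontinuous_tsum fun i ↦
    (ENNReal.continuous_ofReal.comp (by fun_prop)).lowerSemicontinuous
  have haffine : ∀ φ ∈ stateSpace C, ∀ ψ ∈ stateSpace C, ∀ a b : ℝ, 0 < a → 0 < b → a + b = 1 →
      ENNReal.ofReal a * F φ + ENNReal.ofReal b * F ψ ≤ F (a • φ + b • ψ) := by
    intro φ hφ ψ hψ a b ha hb _
    rw [← ENNReal.tsum_mul_left, ← ENNReal.tsum_mul_left, ← ENNReal.tsum_add]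
    refine ENNReal.tsum_le_tsum fun i ↦ ?_
    have hφi := (Complex.le_def.1 (hφ.2.2 (x i)).2).1
    have hψi := (Complex.le_def.1 (hψ.2.2 (x i)).2).1
    rw [← ENNReal.ofReal_mul ha.le, ← ENNReal.ofReal_mul hb.le,
      ← ENNReal.ofReal_add (mul_nonneg ha.le hφi) (mul_nonneg hb.le hψi)]
    simp
  obtain ⟨φ, hφ, hle⟩ := exists_mem_extremePoints_apply_le (isCompact_stateSpace C) hlsc haffine
    (vecFn_mem_stateSpace hΨ hv)
  obtain ⟨L, _, _, _, Φ, w, hΦ, hw, hcyc, rfl⟩ := exists_vecFn_eq_of_mem_stateSpace hφ.1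
  refine ⟨L, _, _, _, Φ, w, isTopIrredRep_of_mem_extremePoints hΦ hw hcyc hφ, hΦ, hw, ?_⟩
  simpa only [F, ofReal_re_vecFn_star_mul_self] using hle

variable {A : Type} [NonUnitalRing A] [Module ℂ A] [SMulCommClass ℂ A A] [IsScalarTower ℂ A A]
  [StarRing A]

theorem starLift_apply_eq_smul_one_add {D : Type*} [Ring D] [Algebra ℂ D] [StarRing D]
    [StarModule ℂ D] (φ : A →⋆ₙₐ[ℂ] D) (y : Unitization ℂ A) :
    Unitization.starLift φ y = y.fst • (1 : D) + φ y.snd := by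
  rw [← Algebra.algebraMap_eq_smul_one]
  rfl

theorem starLift_comp_apply {C D : Type*} [Ring C] [Algebra ℂ C] [StarRing C] [StarModule ℂ C]
    [Ring D] [Algebra ℂ D] [StarRing D] [StarModule ℂ D] {Φ : C →⋆ₙₐ[ℂ] D} (hΦ : Φ 1 = 1)
    (j : A →⋆ₙₐ[ℂ] C) (y : Unitization ℂ A) :
    Unitization.starLift (Φ.comp j) y = Φ (Unitization.starLift j y) := by
  simp only [starLift_apply_eq_smul_one_add, map_add, map_smul, hΦ, NonUnitalStarAlgHom.comp_apply]

open scoped CStarAlgebra in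
theorem IsTopIrredRep.comp_of_denseRange {C K : Type} [CStarAlgebra C] [NormedAddCommGroup K]
    [InnerProductSpace ℂ K] [CompleteSpace K] {Φ : C →⋆ₙₐ[ℂ] (K →L[ℂ] K)} (h : IsTopIrredRep Φ)
    (hΦ : Φ 1 = 1) {j : A →⋆ₙₐ[ℂ] C} (hj : DenseRange (Unitization.starLift j)) :
    IsTopIrredRep (Φ.comp j) := by
  refine ⟨h.1, fun S hS hinv ↦ h.2 S hS fun c x hx ↦ ?_⟩
  have hclosed : IsClosed {c | Φ c x ∈ S} := hS.preimage (by fun_prop)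
  refine hclosed.closure_subset_iff.2 (Set.range_subset_iff.2 fun y ↦ ?_) (hj c)
  rw [Set.mem_ofPred_eq, ← starLift_comp_apply hΦ, starLift_apply_eq_smul_one_add]
  exact S.add_mem (S.smul_mem y.fst hx) (hinv y.snd x hx)

variable [StarModule ℂ A]

theorem exists_isTopIrredRep_tsum_le {X : Type} {ι : Type*} [NormedAddCommGroup X]
    [InnerProductSpace ℂ X] [CompleteSpace X] (τ : A →⋆ₙₐ[ℂ] (X →L[ℂ] X)) {v : X} (hv : ‖v‖ = 1)
    (x : ι → Unitization ℂ A) :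
    ∃ (K : Type) (_ : NormedAddCommGroup K) (_ : InnerProductSpace ℂ K) (_ : CompleteSpace K)
      (Φ : A →⋆ₙₐ[ℂ] (K →L[ℂ] K)) (w : K), IsTopIrredRep Φ ∧ ‖w‖ = 1 ∧
      ∑' i, ‖Unitization.starLift Φ (x i) w‖ₑ ^ 2 ≤
        ∑' i, ‖Unitization.starLift τ (x i) v‖ₑ ^ 2 := by
  let C : StarSubalgebra ℂ (X →L[ℂ] X) := (Unitization.starLift τ).range.topologicalClosure
  have hC : IsClosed (C : Set (X →L[ℂ] X)) := StarSubalgebra.isClosed_topologicalClosure _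
  let _ : CStarAlgebra C := StarSubalgebra.cstarAlgebra C (h_closed := hC)
  let τC : Unitization ℂ A →⋆ₐ[ℂ] C := (Unitization.starLift τ).codRestrict C fun y ↦
    StarSubalgebra.le_topologicalClosure _ ⟨y, rfl⟩
  let j : A →⋆ₙₐ[ℂ] C := Unitization.starLift.symm τC
  have hj : Unitization.starLift j = τC := Equiv.apply_symm_apply _ _
  have hdense : DenseRange (Unitization.starLift j) := by
    rw [hj, DenseRange, Subtype.dense_iff, ← Set.range_comp]
    exact subset_rfl
  obtain ⟨K, _, _, _, Φ, w, hirr, hΦ, hw, hle⟩ := exists_isTopIrredRep_tsum_le_of_cstarAlgebra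
    (Ψ := (C.subtype : C →⋆ₙₐ[ℂ] (X →L[ℂ] X))) rfl hv fun i ↦ τC (x i)
  refine ⟨K, _, _, _, Φ.comp j, w, hirr.comp_of_denseRange hΦ hdense, hw, ?_⟩
  simp only [starLift_comp_apply hΦ, hj]
  exact hle

end States

section InfiniteDimensional

theorem linearIndependent_of_norm_sub_one_mul_card_lt_one {𝕜 ι E : Type*} [NormedField 𝕜]
    [AddCommGroup E] [Module 𝕜 E] [Fintype ι] [DecidableEq ι] {u : ι → E} (l : ι → E →ₗ[𝕜] 𝕜)
    (h : ∀ i k, ‖l k (u i) - (1 : Matrix ι ι 𝕜) i k‖ * Fintype.card ι < 1) :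
    LinearIndependent 𝕜 u := by
  have hdet : (Matrix.of fun i k ↦ l k (u i)).det ≠ 0 := by
    refine det_ne_zero_of_sum_row_lt_diag fun i ↦ ?_
    have hcard : (0 : ℝ) < Fintype.card ι := Nat.cast_pos.2 (Fintype.card_pos_iff.2 ⟨i⟩)
    have hsum : ∑ k, ‖l k (u i) - (1 : Matrix ι ι 𝕜) i k‖ < 1 := by
      refine (Finset.sum_lt_sum_of_nonempty ⟨i, Finset.mem_univ i⟩ fun k _ ↦
        (lt_div_iff₀ hcard).2 (h i k)).trans_eq ?_
      rw [Finset.sum_const, Finset.card_univ, nsmul_eq_mul, mul_one_div_cancel hcard.ne']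
    rw [← Finset.sum_erase_add _ _ (Finset.mem_univ i), Matrix.one_apply_eq] at hsum
    have hdiag := norm_sub_norm_le (1 : 𝕜) (l i (u i))
    rw [norm_one, norm_sub_rev] at hdiag
    calc ∑ k ∈ Finset.univ.erase i, ‖l k (u i)‖
        = ∑ k ∈ Finset.univ.erase i, ‖l k (u i) - (1 : Matrix ι ι 𝕜) i k‖ :=
          Finset.sum_congr rfl fun k hk ↦ by
            rw [Matrix.one_apply_ne (Finset.ne_of_mem_erase hk).symm, sub_zero]
      _ < ‖l i (u i)‖ := by linarith
  exact LinearIndependent.of_comp (LinearMap.pi l)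
    (Matrix.linearIndependent_rows_of_det_ne_zero hdet)

section

variable {A : Type*} [NonUnitalRing A] [Module ℂ A] [StarRing A] {X : Type*} [NormedAddCommGroup X]
  [InnerProductSpace ℂ X] [CompleteSpace X] {τ : A →⋆ₙₐ[ℂ] (X →L[ℂ] X)} {u : ℕ → X}

theorem IsJointlyCyclic.exists_norm_sub_lt (hu : IsJointlyCyclic τ u) {v : X}
    (hv : DenseRange (orbit τ v)) {n : ℕ} {ε : Fin n → Fin n → ℝ} (hε : ∀ i k, 0 < ε i k) :
    ∃ a b : Fin n → A, ∀ i k, ‖τ (a k * b i) v - if i = k then v else 0‖ < ε i k := by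
  have ha : ∀ k : Fin n, ∃ a, ∀ i : Fin n, ‖τ a (u i) - if i = k then v else 0‖ < ε i k := by
    intro k
    have hopen : IsOpen {y : Fin n → X | ∀ i, ‖y i - if i = k then v else 0‖ < ε i k} := by
      simp only [Set.ofPred_forall]
      exact isOpen_iInter_of_finite fun i ↦ isOpen_lt (by fun_prop) (by fun_prop)
    obtain ⟨a, ha⟩ := (hu n).exists_mem_open hopen
      ⟨fun i ↦ if i = k then v else 0, fun i ↦ by simpa using hε i k⟩
    exact ⟨a, ha⟩
  choose a ha using ha
  have hb : ∀ i : Fin n, ∃ b, ∀ k, ‖τ (a k) (τ b v) - if i = k then v else 0‖ < ε i k := by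
    intro i
    have hopen : IsOpen {y | ∀ k, ‖τ (a k) y - if i = k then v else 0‖ < ε i k} := by
      simp only [Set.ofPred_forall]
      exact isOpen_iInter_of_finite fun k ↦ isOpen_lt (by fun_prop) (by fun_prop)
    obtain ⟨b, hb⟩ := hv.exists_mem_open hopen ⟨u i, fun k ↦ ha k i⟩
    exact ⟨b, hb⟩
  choose b hb using hb
  exact ⟨a, b, fun i k ↦ by simpa only [rep_mul_apply] using hb i k⟩

theorem IsJointlyCyclic.exists_norm_eq_one_denseRange_orbit [Nontrivial X]
    (hu : IsJointlyCyclic τ u) : ∃ v, ‖v‖ = 1 ∧ DenseRange (orbit τ v) := by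
  have hcyc : DenseRange (orbit τ (u 0)) :=
    (Function.surjective_eval (0 : Fin 1)).denseRange.comp (hu 1) (continuous_apply _)
  have hu0 : u 0 ≠ 0 := fun h ↦ by
    obtain ⟨x, hx⟩ := exists_ne (0 : X)
    exact hx (hcyc.eq_zero_of_inner_left (𝕜 := ℂ) fun a ↦ by simp [h])
  have hc : (‖u 0‖⁻¹ : ℂ) ≠ 0 := by simpa using hu0
  refine ⟨(‖u 0‖⁻¹ : ℂ) • u 0, norm_smul_inv_norm hu0, ?_⟩
  have horbit : orbit τ ((‖u 0‖⁻¹ : ℂ) • u 0) = (‖u 0‖⁻¹ : ℂ) • orbit τ (u 0) := by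
    ext a
    simp
  rw [horbit]
  exact (MulAction.surjective (Units.mk0 _ hc)).denseRange.comp hcyc (continuous_const_smul _)

end

variable {A : Type} [NonUnitalRing A] [Module ℂ A] [SMulCommClass ℂ A A] [IsScalarTower ℂ A A]
  [StarRing A] [StarModule ℂ A]

/-- An infinite sequence of norm constraints can be transferred to an irreducible representation
because the weighted sum of their squared errors is minimised at a pure state. -/
theorem exists_isTopIrredRep_norm_sub_lt {X : Type} {ι : Type*} [Countable ι]
    [NormedAddCommGroup X] [InnerProductSpace ℂ X] [CompleteSpace X]
    (τ : A →⋆ₙₐ[ℂ] (X →L[ℂ] X)) {v : X} (hv : ‖v‖ = 1) {ε : ι → ℝ} (hε : ∀ i, 0 < ε i) :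
    ∃ δ : ι → ℝ, (∀ i, 0 < δ i) ∧ ∀ (c : ι → A) (t : ι → ℂ), (∀ i, ‖τ (c i) v - t i • v‖ < δ i) →
      ∃ (K : Type) (_ : NormedAddCommGroup K) (_ : InnerProductSpace ℂ K) (_ : CompleteSpace K)
        (Φ : A →⋆ₙₐ[ℂ] (K →L[ℂ] K)) (w : K), IsTopIrredRep Φ ∧ ‖w‖ = 1 ∧
        ∀ i, ‖Φ (c i) w - t i • w‖ < ε i := by
  obtain ⟨δ, hδ, hδsum⟩ := ENNReal.exists_pos_sum_of_countable one_ne_zero ι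
  refine ⟨fun i ↦ ε i * √(δ i), fun i ↦ mul_pos (hε i) (Real.sqrt_pos.2 (hδ i)), fun c t hct ↦ ?_⟩
  let x : ι → Unitization ℂ A := fun i ↦ ((ε i)⁻¹ : ℂ) • ((c i : Unitization ℂ A) - t i • 1)
  have hx : ∀ {L : Type} [NormedAddCommGroup L] [InnerProductSpace ℂ L] [CompleteSpace L]
      (Φ : A →⋆ₙₐ[ℂ] (L →L[ℂ] L)) (w : L) (i : ι),
      ‖Unitization.starLift Φ (x i) w‖ = ‖Φ (c i) w - t i • w‖ / ε i := by
    intro L _ _ _ Φ w i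
    have hxi : Unitization.starLift Φ (x i) w = ((ε i)⁻¹ : ℂ) • (Φ (c i) w - t i • w) := by
      simp only [x, starLift_apply_eq_smul_one_add]
      simp [sub_eq_neg_add, smul_smul]
    rw [hxi, norm_smul, norm_inv, Complex.norm_real, Real.norm_of_nonneg (hε i).le, inv_mul_eq_div]
  obtain ⟨K, _, _, _, Φ, w, hΦ, hw, hle⟩ := exists_isTopIrredRep_tsum_le τ hv x
  refine ⟨K, _, _, _, Φ, w, hΦ, hw, fun i ↦ ?_⟩
  have hsum : ∑' i, ‖Unitization.starLift τ (x i) v‖ₑ ^ 2 < 1 := by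
    refine (ENNReal.tsum_le_tsum fun i ↦ ?_).trans_lt hδsum
    rw [← ofReal_norm, ← ENNReal.ofReal_pow (norm_nonneg _), hx]
    refine ENNReal.ofReal_le_of_le_toReal ?_
    exact (Real.le_sqrt (div_nonneg (norm_nonneg _) (hε i).le) (δ i).coe_nonneg).1
      ((div_le_iff₀' (hε i)).2 (hct i).le)
  have hi : ‖Unitization.starLift Φ (x i) w‖ₑ ^ 2 < 1 :=
    (ENNReal.le_tsum i).trans_lt (hle.trans_lt hsum)
  rw [← div_lt_one (hε i), ← hx, ← pow_lt_one_iff_of_nonneg (norm_nonneg _) two_ne_zero]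
  rwa [← ofReal_norm, ← ENNReal.ofReal_pow (norm_nonneg _), ENNReal.ofReal_lt_one] at hi

theorem IsJointlyCyclic.exists_isTopIrredRep_not_finiteDimensional {X : Type}
    [NormedAddCommGroup X] [InnerProductSpace ℂ X] [CompleteSpace X] [Nontrivial X]
    {τ : A →⋆ₙₐ[ℂ] (X →L[ℂ] X)} {u : ℕ → X} (hu : IsJointlyCyclic τ u) :
    ∃ (K : Type) (_ : NormedAddCommGroup K) (_ : InnerProductSpace ℂ K) (_ : CompleteSpace K)
      (Φ : A →⋆ₙₐ[ℂ] (K →L[ℂ] K)), IsTopIrredRep Φ ∧ ¬ FiniteDimensional ℂ K := by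
  obtain ⟨v, hv, hcyc⟩ := hu.exists_norm_eq_one_denseRange_orbit
  obtain ⟨δ, hδ, hmain⟩ := exists_isTopIrredRep_norm_sub_lt τ hv
    (ε := fun x : Σ n : ℕ, Fin n × Fin n ↦ (x.1 + 1 : ℝ)⁻¹) fun x ↦ inv_pos.2 x.1.cast_add_one_pos
  choose a b hab using fun n : ℕ ↦ hu.exists_norm_sub_lt hcyc (n := n)
    (ε := fun i k ↦ δ ⟨n, i, k⟩) fun i k ↦ hδ _
  obtain ⟨K, _, _, _, Φ, w, hΦ, hw, hlt⟩ := hmain (fun ⟨n, i, k⟩ ↦ a n k * b n i)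
    (fun ⟨n, i, k⟩ ↦ (1 : Matrix (Fin n) (Fin n) ℂ) i k) fun ⟨n, i, k⟩ ↦ by
      simpa only [Matrix.one_apply, ite_smul, one_smul, zero_smul] using hab n i k
  refine ⟨K, _, _, _, Φ, hΦ, fun hfin ↦ ?_⟩
  let n := Module.finrank ℂ K + 1
  have hli : LinearIndependent ℂ fun i : Fin n ↦ Φ (b n i) w :=
    linearIndependent_of_norm_sub_one_mul_card_lt_one
      (fun k ↦ (innerSL ℂ w ∘L Φ (a n k) : K →L[ℂ] ℂ)) fun i k ↦ by
    let t := (1 : Matrix (Fin n) (Fin n) ℂ) i k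
    have hik : ‖Φ (a n k * b n i) w - t • w‖ < (n + 1 : ℝ)⁻¹ := hlt ⟨n, i, k⟩
    have hinner : ⟪w, Φ (a n k * b n i) w - t • w⟫_ℂ = ⟪w, Φ (a n k) (Φ (b n i) w)⟫_ℂ - t := by
      rw [inner_sub_right, inner_smul_right, inner_self_eq_norm_sq_to_K, hw, rep_mul_apply]
      simp
    have hn : (0 : ℝ) < n + 1 := n.cast_add_one_pos
    calc ‖⟪w, Φ (a n k) (Φ (b n i) w)⟫_ℂ - t‖ * Fintype.card (Fin n)
        ≤ ‖Φ (a n k * b n i) w - t • w‖ * (n + 1) := by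
          rw [← hinner, Fintype.card_fin]
          gcongr
          · exact (norm_inner_le_norm _ _).trans_eq (by rw [hw, one_mul])
          · exact (lt_add_one _).le
      _ < 1 := by simpa [hn.ne'] using mul_lt_mul_of_pos_right hik hn
  simpa [n] using hli.fintype_card_le_finrank

end InfiniteDimensional

section Uniqueness

variable {A : Type} [NonUnitalRing A] [Module ℂ A] [StarRing A]

theorem SingularR.mono_left {f f' g : A →ₗ[ℂ] ℂ} (h : SingularR f g) (hle : FnLE f' f) :
    SingularR f' g :=
  fun p hp hp_pos hpf hpg ↦ h p hp hp_pos (hpf.trans hle) hpg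

section Decomposition

variable {G F X Y : Type*} [NormedAddCommGroup G] [InnerProductSpace ℂ G] [CompleteSpace G]
  [NormedAddCommGroup F] [InnerProductSpace ℂ F] [CompleteSpace F]
  [NormedAddCommGroup X] [InnerProductSpace ℂ X] [CompleteSpace X]
  [NormedAddCommGroup Y] [InnerProductSpace ℂ Y] [CompleteSpace Y]
  {π : A →⋆ₙₐ[ℂ] (G →L[ℂ] G)} {σ : A →⋆ₙₐ[ℂ] (F →L[ℂ] F)} {ρ : A →⋆ₙₐ[ℂ] (X →L[ℂ] X)}
  {τ : A →⋆ₙₐ[ℂ] (Y →L[ℂ] Y)} {η : G} {ξ : F} {κ : X} {θ : Y}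

/-- The intertwiner from `vecFn σ ξ` to its absolutely continuous part kills the multivalued part,
so only the singular part is affected by replacing `ξ` with `regVec π σ η ξ`. -/
theorem exists_vecFn_regVec_eq_add (hξ : DenseRange (orbit σ ξ)) (hκ : DenseRange (orbit ρ κ))
    (hθ : DenseRange (orbit τ θ)) (hadd : vecFn σ ξ = vecFn ρ κ + vecFn τ θ)
    (hac : AbsContR (vecFn ρ κ) (vecFn π η)) :
    ∃ y : Y, vecFn σ (regVec π σ η ξ) = vecFn ρ κ + vecFn τ y ∧
      FnLE (vecFn τ y) (vecFn τ θ) := by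
  obtain ⟨J, S, hJ, hS, hJξ, hSξ, hJS⟩ := exists_intertwiners_of_vecFn_eq_add hξ hκ hθ hadd
  set M := mulPart π σ η ξ
  have hJM : ∀ m ∈ M, J m = 0 := fun m hm ↦ by
    have := hJ.map_mem_mulPart hm
    rwa [hJξ, hac.mulPart_eq_bot hκ, Submodule.mem_bot] at this
  have hJP : ∀ x, J (Mᗮ.starProjection x) = J x := fun x ↦ by
    rw [Submodule.starProjection_orthogonal_val, map_sub,
      hJM _ (Submodule.starProjection_apply_mem _ _), sub_zero]
  have hrep : ∀ a, σ a (regVec π σ η ξ) = Mᗮ.starProjection (σ a ξ) := fun a ↦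
    (isRepInvariant_mulPart.orthogonal.intertwines_starProjection a ξ).symm
  have hnorm : ∀ x, ‖J x‖ ^ 2 + ‖S x‖ ^ 2 = ‖x‖ ^ 2 := fun x ↦ by
    simp only [← inner_self_eq_norm_sq (𝕜 := ℂ), ← map_add, hJS]
  refine ⟨S (regVec π σ η ξ), ?_, vecFn_fnLE_iff.2 fun a ↦ ?_⟩
  · ext a
    have hJζ : J (regVec π σ η ξ) = κ := (hJP ξ).trans hJξ
    rw [LinearMap.add_apply, vecFn_apply, vecFn_apply, vecFn_apply, ← hJS, hJ, hS, hJζ]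
  · rw [← hS, ← hSξ, ← hS, hrep, ← pow_le_pow_iff_left₀ (norm_nonneg _) (norm_nonneg _) two_ne_zero]
    have hle := pow_le_pow_left₀ (norm_nonneg _) (Mᗮ.norm_starProjection_apply_le (σ a ξ)) 2
    have hP := hnorm (Mᗮ.starProjection (σ a ξ))
    rw [hJP] at hP
    linarith [hnorm (σ a ξ)]

end Decomposition

variable [SMulCommClass ℂ A A] [IsScalarTower ℂ A A] [StarModule ℂ A]
  (hfin : ∀ (H : Type) [NormedAddCommGroup H] [InnerProductSpace ℂ H] [CompleteSpace H]
    (π : A →⋆ₙₐ[ℂ] (H →L[ℂ] H)), IsTopIrredRep π → FiniteDimensional ℂ H)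

include hfin

theorem SingularR.eq_zero_of_fnLE {G : Type} {F : Type*} [NormedAddCommGroup G]
    [InnerProductSpace ℂ G] [CompleteSpace G] [NormedAddCommGroup F] [InnerProductSpace ℂ F]
    [CompleteSpace F] {π : A →⋆ₙₐ[ℂ] (G →L[ℂ] G)} {σ : A →⋆ₙₐ[ℂ] (F →L[ℂ] F)} {η : G} {ζ : F}
    {p : A →ₗ[ℂ] ℂ} (hsing : SingularR p (vecFn π η)) (hp : IsRepresentable p)
    (hle : FnLE p (vecFn σ ζ)) (hη : DenseRange (orbit π η)) (hclosable : mulPart π σ η ζ = ⊥) :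
    p = 0 := by
  obtain ⟨X, _, _, _, τ, θ, hθ, rfl⟩ := hp.exists_vecFn
  rcases subsingleton_or_nontrivial X with _ | _
  · exact vecFn_eq_zero_iff.2 fun a ↦ Subsingleton.elim _ _
  obtain ⟨S, hS, rfl, -⟩ := exists_intertwiner hθ (vecFn_fnLE_iff.1 hle)
  obtain ⟨u, hu⟩ := exists_isJointlyCyclic hη hclosable hS hθ hsing
  obtain ⟨K, _, _, _, Φ, hΦ, hK⟩ := hu.exists_isTopIrredRep_not_finiteDimensional
  exact absurd (hfin K Φ hΦ) hK

theorem IsLebDecompR.eq_vecFn_regVec {G F : Type} [NormedAddCommGroup G] [InnerProductSpace ℂ G]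
    [CompleteSpace G] [NormedAddCommGroup F] [InnerProductSpace ℂ F] [CompleteSpace F]
    {π : A →⋆ₙₐ[ℂ] (G →L[ℂ] G)} {σ : A →⋆ₙₐ[ℂ] (F →L[ℂ] F)} {η : G} {ξ : F}
    (hη : DenseRange (orbit π η)) (hξ : DenseRange (orbit σ ξ)) {fr fs : A →ₗ[ℂ] ℂ}
    (h : IsLebDecompR (vecFn σ ξ) (vecFn π η) fr fs) : fr = vecFn σ (regVec π σ η ξ) := by
  obtain ⟨hfr, -, hfs, -, hadd, hac, hsing⟩ := h
  obtain ⟨X, _, _, _, ρ, κ, hκ, rfl⟩ := hfr.exists_vecFn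
  obtain ⟨Y, _, _, _, τ, θ, hθ, rfl⟩ := hfs.exists_vecFn
  obtain ⟨y, hreg, hle⟩ := exists_vecFn_regVec_eq_add hξ hκ hθ hadd hac
  have hy : FnLE (vecFn τ y) (vecFn σ (regVec π σ η ξ)) := by
    rw [hreg, add_comm]
    exact FnLE.add_right _ (isPosFn_vecFn κ)
  rw [hreg, (hsing.mono_left hle).eq_zero_of_fnLE hfin (isRepresentable_vecFn _ _) hy hη
    mulPart_regVec, add_zero]

theorem lebDecompUniqueR_of_finiteDimensional : LebDecompUniqueR A := by
  intro f g hf _ hg _ fr fs fr' fs' h h'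
  obtain ⟨G, _, _, _, π, η, hη, rfl⟩ := hg.exists_vecFn
  obtain ⟨F, _, _, _, σ, ξ, hξ, rfl⟩ := hf.exists_vecFn
  have hfr : fr = fr' :=
    (h.eq_vecFn_regVec hfin hη hξ).trans (h'.eq_vecFn_regVec hfin hη hξ).symm
  have hsum : fr + fs = fr' + fs' := h.2.2.2.2.1.symm.trans h'.2.2.2.2.1
  exact ⟨hfr, add_left_cancel (hfr ▸ hsum)⟩

end Uniqueness

section Schur

variable {A H : Type} [NonUnitalRing A] [Module ℂ A] [StarRing A]
  [NormedAddCommGroup H] [InnerProductSpace ℂ H] [CompleteSpace H] {π : A →⋆ₙₐ[ℂ] (H →L[ℂ] H)}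

theorem IsTopIrredRep.eq_zero_or_eq_zero_of_mul_eq_zero (hπ : IsTopIrredRep π) {R S : H →L[ℂ] H}
    (hR : Intertwines R π π) (hRS : R * S = 0) : R = 0 ∨ S = 0 := by
  have hker : ∀ a, ∀ x ∈ R.ker, π a x ∈ R.ker := fun a x hx ↦ by
    rw [LinearMap.mem_ker, ContinuousLinearMap.coe_coe] at hx ⊢
    rw [hR, hx, map_zero]
  rcases hπ.2 R.ker R.isClosed_ker hker with h | h
  · refine .inr (ContinuousLinearMap.ext fun x ↦ ?_)
    have hSx : S x ∈ R.ker := DFunLike.congr_fun hRS x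
    rwa [h, Submodule.mem_bot] at hSx
  · refine .inl (ContinuousLinearMap.ext fun x ↦ ?_)
    have hx : x ∈ R.ker := h ▸ Submodule.mem_top
    exact hx

/-- Two points of the spectrum could be separated by continuous functions with product zero. -/
theorem IsTopIrredRep.subsingleton_spectrum (hπ : IsTopIrredRep π) {T : H →L[ℂ] H}
    (hT : IsSelfAdjoint T) (hTπ : Intertwines T π π) : (spectrum ℝ T).Subsingleton := by
  have := hπ.1
  suffices h : ∀ s ∈ spectrum ℝ T, ∀ t ∈ spectrum ℝ T, t ≤ s from
    fun s hs t ht ↦ le_antisymm (h t ht s hs) (h s hs t ht)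
  intro s hs t ht
  by_contra! hst
  let f : ℝ → ℝ := fun r ↦ max ((s + t) / 2 - r) 0
  let g : ℝ → ℝ := fun r ↦ max (r - (s + t) / 2) 0
  have hfg : ∀ r, f r * g r = 0 := fun r ↦ by
    rcases le_total r ((s + t) / 2) with h | h
    · exact mul_eq_zero_of_right _ (max_eq_right (sub_nonpos.2 h))
    · exact mul_eq_zero_of_left (max_eq_right (sub_nonpos.2 h)) _
  have hf : Continuous f := by fun_prop
  have hg : Continuous g := by fun_prop
  have hmul : cfc f T * cfc g T = 0 := by
    rw [← cfc_mul f g T, funext hfg, cfc_const_zero]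
  have hfπ : Intertwines (cfc f T) π π := fun a x ↦
    DFunLike.congr_fun (hT.commute_cfc (ContinuousLinearMap.ext (hTπ a) : Commute T (π a)) f).eq x
  have hne : ∀ k : ℝ → ℝ, Continuous k → ∀ r ∈ spectrum ℝ T, 0 < k r → cfc k T ≠ 0 := by
    intro k hk r hr hkr h0
    rw [← cfc_const_zero ℝ T, cfc_eq_cfc_iff_eqOn hT hk.continuousOn] at h0
    exact hkr.ne' (h0 hr)
  rcases hπ.eq_zero_or_eq_zero_of_mul_eq_zero hfπ hmul with h | h
  · exact hne f hf s hs (lt_max_of_lt_left (by linarith)) h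
  · exact hne g hg t ht (lt_max_of_lt_left (by linarith)) h

theorem IsTopIrredRep.exists_eq_algebraMap_of_isSelfAdjoint (hπ : IsTopIrredRep π)
    {T : H →L[ℂ] H} (hT : IsSelfAdjoint T) (hTπ : Intertwines T π π) :
    ∃ c : ℝ, T = algebraMap ℝ _ c := by
  rcases (hπ.subsingleton_spectrum hT hTπ).eq_empty_or_singleton with h | ⟨c, h⟩
  · exact ⟨0, CFC.eq_algebraMap_of_spectrum_subset_singleton T 0 (h ▸ Set.empty_subset _)⟩
  · exact ⟨c, CFC.eq_algebraMap_of_spectrum_subset_singleton T c h.subset⟩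

theorem IsTopIrredRep.exists_eq_smul (hπ : IsTopIrredRep π) {T : H →L[ℂ] H}
    (hT : Intertwines T π π) : ∃ c : ℂ, ∀ x, T x = c • x := by
  have hT' : Intertwines (star T) π π := hT.adjoint
  obtain ⟨c, hc⟩ := hπ.exists_eq_algebraMap_of_isSelfAdjoint (realPart T).2 fun a x ↦ by
    simp [realPart_apply_coe, hT a x, hT' a x]
  obtain ⟨d, hd⟩ := hπ.exists_eq_algebraMap_of_isSelfAdjoint (imaginaryPart T).2 fun a x ↦ by
    simp [imaginaryPart_apply_coe, hT a x, hT' a x]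
  refine ⟨c + Complex.I * d, fun x ↦ ?_⟩
  rw [← realPart_add_I_smul_imaginaryPart T, hc, hd]
  simp [Algebra.algebraMap_eq_smul_one, add_smul, mul_smul]

end Schur

section EllTwo

open Filter Topology

/-- The Hilbert space `ℓ²(ℕ, H)` of square summable sequences in `H`. -/
abbrev EllTwo (H : Type*) [NormedAddCommGroup H] : Type _ := lp (fun _ : ℕ ↦ H) 2

variable {A H : Type*} [NonUnitalRing A] [Module ℂ A] [StarRing A] [NormedAddCommGroup H]

theorem EllTwo.hasSum_norm_sq (f : EllTwo H) : HasSum (fun n ↦ ‖f n‖ ^ 2) (‖f‖ ^ 2) := by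
  simpa using lp.hasSum_norm (p := 2) (by norm_num) f

/-- The truncation `(f₀, …, f_{N-1}, 0, 0, …)` of a sequence `f`. -/
def truncation (f : EllTwo H) (N : ℕ) : EllTwo H := ∑ n ∈ Finset.range N, lp.single 2 n (f n)

theorem tendsto_truncation (f : EllTwo H) :
    Tendsto (truncation f) atTop (𝓝 f) :=
  (lp.hasSum_single (p := 2) (by norm_num) f).tendsto_sum_nat

variable [InnerProductSpace ℂ H]

/-- The diagonal operator `(fₙ)ₙ ↦ (T fₙ)ₙ` on `ℓ²(ℕ, H)`. -/
def ellOp (T : H →L[ℂ] H) : EllTwo H →L[ℂ] EllTwo H :=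
  LinearMap.mkContinuous
    { toFun := fun f ↦ ⟨fun n ↦ T (f n), ((lp.memℓp f).norm.const_mul ‖T‖).mono fun n ↦
        T.le_opNorm (f n)⟩
      map_add' := fun f g ↦ by ext n; exact map_add T _ _
      map_smul' := fun c f ↦ by ext n; simp } ‖T‖ fun f ↦ by
    rw [← sq_le_sq₀ (norm_nonneg _) (by positivity), mul_pow]
    refine hasSum_le (fun n ↦ ?_) (EllTwo.hasSum_norm_sq _)
      ((EllTwo.hasSum_norm_sq f).mul_left (‖T‖ ^ 2))
    rw [← mul_pow]
    exact pow_le_pow_left₀ (norm_nonneg _) (T.le_opNorm (f n)) 2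

@[simp]
theorem ellOp_apply (T : H →L[ℂ] H) (f : EllTwo H) (n : ℕ) : ellOp T f n = T (f n) := rfl

variable [CompleteSpace H] (π : A →⋆ₙₐ[ℂ] (H →L[ℂ] H))

/-- The countable multiple of the representation `π`, acting diagonally on `ℓ²(ℕ, H)`. -/
def ellRep : A →⋆ₙₐ[ℂ] (EllTwo H →L[ℂ] EllTwo H) where
  toFun a := ellOp (π a)
  map_smul' c a := by ext f n; simp
  map_zero' := by ext f n; simp
  map_add' a b := by ext f n; simp
  map_mul' a b := by ext f n; simp
  map_star' a := by
    rw [ContinuousLinearMap.star_eq_adjoint, ContinuousLinearMap.eq_adjoint_iff]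
    intro f g
    simp only [lp.inner_eq_tsum, ellOp_apply, rep_inner_left, star_star]

@[simp]
theorem ellRep_apply (a : A) (f : EllTwo H) (n : ℕ) : ellRep π a f n = π a (f n) := rfl

theorem ellRep_single (a : A) (n : ℕ) (x : H) :
    ellRep π a (lp.single 2 n x) = lp.single 2 n (π a x) := by
  ext k
  rw [ellRep_apply, lp.single_apply, lp.single_apply]
  exact Pi.apply_single (fun _ ↦ π a) (fun _ ↦ map_zero _) n x k

theorem sum_norm_rep_sq_le (a : A) (f : EllTwo H) (N : ℕ) :
    ∑ n ∈ Finset.range N, ‖π a (f n)‖ ^ 2 ≤ ‖ellRep π a f‖ ^ 2 :=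
  sum_le_hasSum _ (fun _ _ ↦ by positivity) (EllTwo.hasSum_norm_sq (ellRep π a f))

theorem norm_ellRep_truncation_sq (a : A) (f : EllTwo H) (N : ℕ) :
    ‖ellRep π a (truncation f N)‖ ^ 2 = ∑ n ∈ Finset.range N, ‖π a (f n)‖ ^ 2 := by
  simp only [truncation, map_sum, ellRep_single]
  simpa using lp.norm_sum_single (E := fun _ : ℕ ↦ H) (p := 2) (by norm_num)
    (fun n ↦ π a (f n)) (Finset.range N)

end EllTwo

section Singular

open Filter Topology

theorem tendsto_zero_of_map_single {H : Type*} [NormedAddCommGroup H] [InnerProductSpace ℂ H]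
    [CompleteSpace H] [Nontrivial H] {T : EllTwo H →L[ℂ] H} {l : ℕ → ℂ}
    (hl : ∀ n y, T (lp.single 2 n y) = l n • y) : Tendsto l atTop (𝓝 0) := by
  obtain ⟨e, he⟩ := exists_ne (0 : H)
  let w : EllTwo H := ContinuousLinearMap.adjoint T e
  have hw : ∀ n, w n = star (l n) • e := fun n ↦ ext_inner_left ℂ fun y ↦ by
    rw [← lp.inner_single_left (G := fun _ : ℕ ↦ H), ContinuousLinearMap.adjoint_inner_right, hl,
      inner_smul_left, inner_smul_right, RCLike.star_def]
  have hw₀ : Tendsto (fun n ↦ (‖l n‖ * ‖e‖) ^ 2) atTop (𝓝 0) := by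
    simpa [hw, norm_smul] using w.hasSum_norm_sq.summable.tendsto_atTop_zero
  rw [tendsto_zero_iff_norm_tendsto_zero]
  simpa [Real.sqrt_sq, mul_nonneg, he] using hw₀.sqrt.div_const ‖e‖

variable {A H K : Type} [NonUnitalRing A] [Module ℂ A] [StarRing A]
  [NormedAddCommGroup H] [InnerProductSpace ℂ H] [CompleteSpace H]
  [NormedAddCommGroup K] [InnerProductSpace ℂ K] [CompleteSpace K]
  {π : A →⋆ₙₐ[ℂ] (H →L[ℂ] H)} {σ : A →⋆ₙₐ[ℂ] (K →L[ℂ] K)}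

theorem IsTopIrredRep.exists_hasSum_smul (hπ : IsTopIrredRep π) {T : EllTwo H →L[ℂ] H}
    (hT : Intertwines T (ellRep π) π) : ∃ l : ℕ → ℂ, Tendsto l atTop (𝓝 0) ∧
      ∀ f : EllTwo H, HasSum (fun n ↦ l n • f n) (T f) := by
  have := hπ.1
  have hscalar : ∀ n : ℕ, ∃ c : ℂ, ∀ y, T (lp.single 2 n y) = c • y := fun n ↦
    hπ.exists_eq_smul (T := T ∘L lp.singleContinuousLinearMap ℂ (fun _ : ℕ ↦ H) 2 n) fun a y ↦ by
      simp [← ellRep_single, hT a]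
  choose l hl using hscalar
  refine ⟨l, tendsto_zero_of_map_single hl, fun f ↦ ?_⟩
  simpa only [hl] using (lp.hasSum_single (p := 2) (by norm_num) f).mapL T

theorem IsTopIrredRep.exists_intertwines_of_fnLE (hπ : IsTopIrredRep π) {p : A →ₗ[ℂ] ℂ}
    (hp : IsRepresentable p) {x : H} {z : K} (hpx : FnLE p (vecFn π x))
    (hpz : FnLE p (vecFn σ z)) :
    ∃ (T : K →L[ℂ] H) (t : ℂ), Intertwines T σ π ∧ T z = t • x ∧ (t = 0 → p = 0) := by
  obtain ⟨P, _, _, _, ρ, ξ, hξ, rfl⟩ := hp.exists_vecFn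
  obtain ⟨J, hJ, rfl, -⟩ := exists_intertwiner hξ (vecFn_fnLE_iff.1 hpx)
  obtain ⟨S, hS, hSz, -⟩ := exists_intertwiner hξ (vecFn_fnLE_iff.1 hpz)
  obtain ⟨t, ht⟩ := hπ.exists_eq_smul (hJ.adjoint.comp hJ)
  refine ⟨ContinuousLinearMap.adjoint J ∘L S, t, hJ.adjoint.comp hS, ?_, fun h0 ↦ ?_⟩
  · rw [ContinuousLinearMap.comp_apply, hSz]
    exact ht x
  · have hJx : J x = 0 := by
      rw [← inner_self_eq_zero (𝕜 := ℂ), ← ContinuousLinearMap.adjoint_inner_right,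
        ← ContinuousLinearMap.comp_apply, ht, h0, zero_smul, inner_zero_right]
    exact vecFn_eq_zero_iff.2 fun a ↦ by rw [hJx, map_zero]

theorem inner_eq_mul_of_hasSum_smul {H : Type*} [NormedAddCommGroup H] [InnerProductSpace ℂ H]
    {z : ℕ → H} (hz : Pairwise fun m n ↦ ⟪z m, z n⟫_ℂ = 0) {l : ℕ → ℂ} {u : H}
    (hu : HasSum (fun n ↦ l n • z n) u) (m : ℕ) : ⟪z m, u⟫_ℂ = l m * ⟪z m, z m⟫_ℂ := by
  refine (hu.mapL (innerSL ℂ (z m))).unique ?_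
  simp only [innerSL_apply_apply, inner_smul_right]
  exact hasSum_single m fun n hn ↦ by rw [hz hn.symm, mul_zero]

/-- By Schur's lemma a functional below both gives an intertwiner `ℓ²(ℕ, H) → H` with scalar
components `lₙ → 0` sending `z` to a multiple `t • x`; orthogonality forces `lₙ = t` for all `n`. -/
theorem IsTopIrredRep.singularR_vecFn (hπ : IsTopIrredRep π) {z : EllTwo H}
    (hz : Pairwise fun m n ↦ ⟪z m, z n⟫_ℂ = 0) (hz₀ : ∀ n, z n ≠ 0) {x : H}
    (hx : HasSum (fun n ↦ z n) x) : SingularR (vecFn π x) (vecFn (ellRep π) z) := by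
  intro p hp _ hpx hpz
  obtain ⟨T, t, hT, hTz, hp₀⟩ := hπ.exists_intertwines_of_fnLE hp hpx hpz
  obtain ⟨l, hl₀, hl⟩ := hπ.exists_hasSum_smul hT
  have hlt : ∀ n, l n = t := fun n ↦ by
    have hlx := inner_eq_mul_of_hasSum_smul hz (hTz ▸ hl z) n
    rw [inner_eq_mul_of_hasSum_smul hz (hx.const_smul t) n] at hlx
    exact (mul_right_cancel₀ (inner_self_ne_zero.2 (hz₀ n)) hlx).symm
  exact hp₀ (tendsto_nhds_unique (tendsto_const_nhds.congr fun n ↦ (hlt n).symm) hl₀)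

end Singular

section GeometricWeights

open Filter Topology

theorem inv_add_mul_norm_sq_le {E : Type*} [SeminormedAddCommGroup E] {b c : ℝ} (hb : 0 < b)
    (hc : 0 < c) (u v : E) :
    (b + c)⁻¹ * ‖u‖ ^ 2 ≤ c⁻¹ * ‖v‖ ^ 2 + b⁻¹ * ‖u + v‖ ^ 2 := by
  have htri : ‖u‖ ≤ ‖v‖ + ‖u + v‖ := by
    simpa [add_comm] using norm_sub_le (u + v) v
  have hsed := Finset.univ.sq_sum_div_le_sum_sq_div ![‖v‖, ‖u + v‖] (g := ![c, b])
    (by simp [Fin.forall_fin_two, hb, hc])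
  simp only [Fin.sum_univ_two, Matrix.cons_val_zero, Matrix.cons_val_one] at hsed
  calc (b + c)⁻¹ * ‖u‖ ^ 2 ≤ (‖v‖ + ‖u + v‖) ^ 2 / (c + b) := by
        rw [div_eq_inv_mul, add_comm c b]
        gcongr
    _ ≤ c⁻¹ * ‖v‖ ^ 2 + b⁻¹ * ‖u + v‖ ^ 2 := by simpa only [div_eq_inv_mul] using hsed

/-- The damping weights `1 + ∑_{n ≥ N} 4⁻ⁿ` of the approximants in `absContR_vecFn_add`. -/
def geomWeight (N : ℕ) : ℝ := 1 + 4 / 3 * (1 / 4) ^ N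

theorem one_le_geomWeight (N : ℕ) : 1 ≤ geomWeight N :=
  le_add_of_nonneg_right (by positivity)

theorem geomWeight_pos (N : ℕ) : 0 < geomWeight N := zero_lt_one.trans_le (one_le_geomWeight N)

theorem geomWeight_eq_succ_add (N : ℕ) : geomWeight N = geomWeight (N + 1) + (4 ^ N)⁻¹ := by
  rw [geomWeight, geomWeight, pow_succ, ← inv_pow, ← one_div]
  ring

theorem tendsto_inv_geomWeight : Tendsto (fun N ↦ (geomWeight N)⁻¹) atTop (𝓝 1) := by
  have h : Tendsto (fun N : ℕ ↦ 1 + 4 / 3 * (1 / 4 : ℝ) ^ N) atTop (𝓝 (1 + 4 / 3 * 0)) :=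
    ((tendsto_pow_atTop_nhds_zero_of_lt_one (by norm_num) (by norm_num)).const_mul _).const_add _
  simpa [geomWeight] using h.inv₀ (by norm_num)

end GeometricWeights

section NonUniqueness

open Filter Topology

variable {A H K : Type} [NonUnitalRing A] [Module ℂ A] [StarRing A]
  [NormedAddCommGroup H] [InnerProductSpace ℂ H] [CompleteSpace H]
  [NormedAddCommGroup K] [InnerProductSpace ℂ K] [CompleteSpace K]
  {π : A →⋆ₙₐ[ℂ] (H →L[ℂ] H)} {σ : A →⋆ₙₐ[ℂ] (K →L[ℂ] K)}

theorem tendsto_vecFn {w : ℕ → K} {y : K} (h : Tendsto w atTop (𝓝 y)) (a : A) :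
    Tendsto (fun n ↦ vecFn σ (w n) a) atTop (𝓝 (vecFn σ y a)) :=
  h.inner (((σ a).continuous.tendsto y).comp h)

theorem vecFn_add_smul_star_mul_self (u : K) (v : H) (c : ℝ) (a : A) :
    (vecFn σ u + (c : ℂ) • vecFn π v) (star a * a) =
      ((‖σ a u‖ ^ 2 + c * ‖π a v‖ ^ 2 : ℝ) : ℂ) := by
  rw [LinearMap.add_apply, LinearMap.smul_apply, vecFn_star_mul_self, vecFn_star_mul_self,
    smul_eq_mul, ← Complex.ofReal_mul, ← Complex.ofReal_add]

section Approximants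

variable {y z : EllTwo H}

theorem norm_rep_sq_of_eq_two_pow_smul (hy : ∀ n, y n = (2 ^ n : ℂ) • z n) (n : ℕ) (a : A) :
    ‖π a (y n)‖ ^ 2 = 4 ^ n * ‖π a (z n)‖ ^ 2 := by
  rw [hy, map_smul, norm_smul, mul_pow, norm_pow, Complex.norm_ofNat, ← pow_mul, mul_comm n 2,
    pow_mul]
  norm_num

theorem norm_ellRep_truncation_sq_le (hy : ∀ n, y n = (2 ^ n : ℂ) • z n) (N : ℕ) (a : A) :
    ‖ellRep π a (truncation y N)‖ ^ 2 ≤ 4 ^ N * ‖ellRep π a z‖ ^ 2 := by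
  have hterm : ∀ n ∈ Finset.range N, ‖π a (y n)‖ ^ 2 ≤ 4 ^ N * ‖π a (z n)‖ ^ 2 := fun n hn ↦ by
    rw [norm_rep_sq_of_eq_two_pow_smul hy]
    have := (Finset.mem_range.1 hn).le
    gcongr
    norm_num
  calc ‖ellRep π a (truncation y N)‖ ^ 2 = ∑ n ∈ Finset.range N, ‖π a (y n)‖ ^ 2 :=
        norm_ellRep_truncation_sq π a y N
    _ ≤ 4 ^ N * ∑ n ∈ Finset.range N, ‖π a (z n)‖ ^ 2 :=
        (Finset.sum_le_sum hterm).trans_eq (Finset.mul_sum ..).symm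
    _ ≤ 4 ^ N * ‖ellRep π a z‖ ^ 2 := by
        gcongr
        exact sum_norm_rep_sq_le π a z N

theorem norm_rep_sum_sq_le (z : EllTwo H) (N : ℕ) (a : A) :
    ‖π a (∑ n ∈ Finset.range N, z n)‖ ^ 2 ≤ N * ‖ellRep π a z‖ ^ 2 :=
  calc ‖π a (∑ n ∈ Finset.range N, z n)‖ ^ 2 ≤ (∑ n ∈ Finset.range N, ‖π a (z n)‖) ^ 2 := by
        rw [map_sum]
        gcongr
        exact norm_sum_le _ _
    _ ≤ N * ∑ n ∈ Finset.range N, ‖π a (z n)‖ ^ 2 := by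
        simpa using sq_sum_le_card_mul_sum_sq (s := Finset.range N) (f := fun n ↦ ‖π a (z n)‖)
    _ ≤ N * ‖ellRep π a z‖ ^ 2 := by
        gcongr
        exact sum_norm_rep_sq_le π a z N

theorem absContR_vecFn_ellRep (hy : ∀ n, y n = (2 ^ n : ℂ) • z n) :
    AbsContR (vecFn (ellRep π) y) (vecFn (ellRep π) z) := by
  refine ⟨fun N ↦ vecFn (ellRep π) (truncation y N), fun N ↦ 4 ^ N,
    fun N ↦ ⟨isRepresentable_vecFn _ _, isPosFn_vecFn _⟩, fun N ↦ by positivity, fun N ↦ ?_,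
    fun N ↦ vecFn_fnLE_smul_iff.2 (norm_ellRep_truncation_sq_le hy N),
    tendsto_vecFn (tendsto_truncation y)⟩
  refine vecFn_fnLE_iff.2 fun a ↦ pow_le_pow_iff_left₀ (norm_nonneg _) (norm_nonneg _)
    two_ne_zero |>.1 ?_
  rw [norm_ellRep_truncation_sq, norm_ellRep_truncation_sq, Finset.sum_range_succ]
  exact le_add_of_nonneg_right (by positivity)

/-- The `N`-th approximant in `absContR_vecFn_add`. -/
def sumApprox (π : A →⋆ₙₐ[ℂ] (H →L[ℂ] H)) (y z : EllTwo H) (N : ℕ) : A →ₗ[ℂ] ℂ :=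
  vecFn (ellRep π) (truncation y N) +
    (((geomWeight N)⁻¹ : ℝ) : ℂ) • vecFn π (∑ n ∈ Finset.range N, z n)

theorem isRepresentable_sumApprox (N : ℕ) : IsRepresentable (sumApprox π y z N) :=
  (isRepresentable_vecFn _ _).add
    ((isRepresentable_vecFn _ _).smul (inv_nonneg.2 (geomWeight_pos N).le))

theorem sumApprox_fnLE_succ (hy : ∀ n, y n = (2 ^ n : ℂ) • z n) (N : ℕ) :
    FnLE (sumApprox π y z N) (sumApprox π y z (N + 1)) := fun a ↦ by
  have h4 : (0 : ℝ) < (4 ^ N)⁻¹ := by positivity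
  have h := inv_add_mul_norm_sq_le (geomWeight_pos (N + 1)) h4
    (π a (∑ n ∈ Finset.range N, z n)) (π a (z N))
  rw [← geomWeight_eq_succ_add, inv_inv, ← norm_rep_sq_of_eq_two_pow_smul hy, ← map_add,
    ← Finset.sum_range_succ] at h
  rw [LinearMap.sub_apply, sumApprox, sumApprox, vecFn_add_smul_star_mul_self,
    vecFn_add_smul_star_mul_self, ← Complex.ofReal_sub, Complex.zero_le_real, sub_nonneg,
    norm_ellRep_truncation_sq, norm_ellRep_truncation_sq, Finset.sum_range_succ _ N]
  linarith

theorem sumApprox_fnLE_smul (hy : ∀ n, y n = (2 ^ n : ℂ) • z n) (N : ℕ) :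
    FnLE (sumApprox π y z N) (((4 ^ N + N : ℝ) : ℂ) • vecFn (ellRep π) z) := fun a ↦ by
  rw [LinearMap.sub_apply, sumApprox, vecFn_add_smul_star_mul_self, LinearMap.smul_apply,
    vecFn_star_mul_self, smul_eq_mul, ← Complex.ofReal_mul, ← Complex.ofReal_sub,
    Complex.zero_le_real, sub_nonneg, add_mul]
  refine add_le_add (norm_ellRep_truncation_sq_le hy N a) ?_
  exact (mul_le_of_le_one_left (by positivity) (inv_le_one_of_one_le₀ (one_le_geomWeight N))).trans
    (norm_rep_sum_sq_le z N a)

theorem absContR_vecFn_add (hy : ∀ n, y n = (2 ^ n : ℂ) • z n) {x : H}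
    (hx : HasSum (fun n ↦ z n) x) :
    AbsContR (vecFn (ellRep π) y + vecFn π x) (vecFn (ellRep π) z) := by
  refine ⟨sumApprox π y z, fun N ↦ 4 ^ N + N,
    fun N ↦ ⟨isRepresentable_sumApprox N, (isRepresentable_sumApprox N).isPosFn⟩,
    fun N ↦ by positivity, sumApprox_fnLE_succ hy, sumApprox_fnLE_smul hy, fun a ↦ ?_⟩
  have hweight : Tendsto (fun N ↦ (((geomWeight N)⁻¹ : ℝ) : ℂ)) atTop (𝓝 1) := by
    simpa only [Complex.ofReal_one, Function.comp_def] using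
      (Complex.continuous_ofReal.tendsto 1).comp tendsto_inv_geomWeight
  simpa [sumApprox] using (tendsto_vecFn (tendsto_truncation y) a).add
    (hweight.mul (tendsto_vecFn hx.tendsto_sum_nat a))

end Approximants

theorem exists_orthonormal_seq {H : Type*} [NormedAddCommGroup H] [InnerProductSpace ℂ H]
    (h : ¬ FiniteDimensional ℂ H) : ∃ e : ℕ → H, Orthonormal ℂ e := by
  let b := Module.Basis.ofVectorSpace ℂ H
  have : Infinite (Module.Basis.ofVectorSpaceIndex ℂ H) := by
    by_contra hfin
    rw [not_infinite_iff_finite] at hfin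
    exact h (Module.Finite.of_basis b)
  exact ⟨_, InnerProductSpace.gramSchmidtNormed_orthonormal
    (b.linearIndependent.comp _ (Infinite.natEmbedding _).injective)⟩

theorem exists_ellTwo_eq_pow_smul {H : Type*} [NormedAddCommGroup H] [NormedSpace ℂ H]
    {e : ℕ → H} (he : ∀ n, ‖e n‖ ≤ 1) {r : ℝ} (hr₀ : 0 ≤ r) (hr₁ : r < 1) :
    ∃ f : EllTwo H, ∀ n, f n = (r ^ n : ℂ) • e n := by
  refine ⟨⟨fun n ↦ (r ^ n : ℂ) • e n, memℓp_gen ?_⟩, fun n ↦ rfl⟩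
  refine (summable_geometric_of_lt_one (sq_nonneg r) (by nlinarith)).of_nonneg_of_le
    (fun n ↦ by positivity) fun n ↦ ?_
  rw [ENNReal.toReal_ofNat, Real.rpow_two, ← pow_mul, mul_comm 2 n, pow_mul]
  gcongr
  rw [norm_smul, norm_pow, Complex.norm_real, Real.norm_of_nonneg hr₀]
  exact mul_le_of_le_one_right (by positivity) (he n)

theorem exists_orthogonal_seq_hasSum (h : ¬ FiniteDimensional ℂ H) :
    ∃ (y z : EllTwo H) (x : H), (∀ n, y n = (2 ^ n : ℂ) • z n) ∧
      (Pairwise fun m n ↦ ⟪z m, z n⟫_ℂ = 0) ∧ (∀ n, z n ≠ 0) ∧ HasSum (fun n ↦ z n) x := by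
  obtain ⟨e, he⟩ := exists_orthonormal_seq h
  have hnorm : ∀ n, ‖e n‖ ≤ 1 := fun n ↦ (he.1 n).le
  obtain ⟨y, hy⟩ := exists_ellTwo_eq_pow_smul hnorm (r := 1 / 2) (by norm_num) (by norm_num)
  obtain ⟨z, hz⟩ := exists_ellTwo_eq_pow_smul hnorm (r := 1 / 4) (by norm_num) (by norm_num)
  have hsum : Summable fun n ↦ z n := by
    refine .of_norm_bounded (summable_geometric_of_lt_one (r := 1 / 4) (by norm_num)
      (by norm_num)) fun n ↦ ?_
    simp [hz, norm_smul, he.1 n]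
  refine ⟨y, z, _, fun n ↦ ?_, fun m n hmn ↦ ?_, fun n ↦ ?_, hsum.hasSum⟩
  · rw [hy, hz, smul_smul, ← mul_pow]
    norm_num
  · simp only [hz, inner_smul_left, inner_smul_right, he.2 hmn, mul_zero]
  · simpa [hz] using he.ne_zero n

theorem singularR_zero (g : A →ₗ[ℂ] ℂ) : SingularR 0 g := by
  intro p hp _ hle _
  obtain ⟨P, _, _, _, ρ, ξ, -, rfl⟩ := hp.exists_vecFn
  have hle' : FnLE (vecFn ρ ξ) (((0 : ℝ) : ℂ) • vecFn ρ ξ) := by simpa using hle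
  refine vecFn_eq_zero_iff.2 fun a ↦ ?_
  simpa [sq_nonpos_iff] using vecFn_fnLE_smul_iff.1 hle' a

theorem IsTopIrredRep.finiteDimensional_of_vecFn_eq_zero (hπ : IsTopIrredRep π) {x : H}
    (hx : x ≠ 0) (h : vecFn π x = 0) : FiniteDimensional ℂ H := by
  have hinv : IsRepInvariant π (Submodule.span ℂ {x}) := fun a w hw ↦ by
    obtain ⟨c, rfl⟩ := Submodule.mem_span_singleton.1 hw
    rw [map_smul, vecFn_eq_zero_iff.1 h, smul_zero]
    exact Submodule.zero_mem _
  rcases hπ.2 _ (Submodule.closed_of_finiteDimensional _) hinv with hbot | htop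
  · exact absurd (Submodule.span_singleton_eq_bot.1 hbot) hx
  · exact Module.finite_def.2 (htop ▸ Submodule.fg_span_singleton x)

variable [SMulCommClass ℂ A A] [IsScalarTower ℂ A A] [StarModule ℂ A]

theorem LebDecompUniqueR.eq_zero_of_singularR (hA : LebDecompUniqueR A) {f g h : A →ₗ[ℂ] ℂ}
    (hf : IsRepresentable f) (hg : IsRepresentable g) (hh : IsRepresentable h)
    (hfg : AbsContR f g) (hfhg : AbsContR (f + h) g) (hhg : SingularR h g) : h = 0 := by
  have hsum := hf.add hh
  exact (hA (f + h) g hsum hsum.isPosFn hg hg.isPosFn f h (f + h) 0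
    ⟨hf, hf.isPosFn, hh, hh.isPosFn, rfl, hfg, hhg⟩
    ⟨hsum, hsum.isPosFn, isRepresentable_zero, isRepresentable_zero.isPosFn, (add_zero _).symm,
      hfhg, singularR_zero g⟩).2

theorem IsTopIrredRep.finiteDimensional_of_lebDecompUniqueR (hπ : IsTopIrredRep π)
    (hA : LebDecompUniqueR A) : FiniteDimensional ℂ H := by
  by_contra hH
  obtain ⟨y, z, x, hy, hz, hz₀, hx⟩ := exists_orthogonal_seq_hasSum hH
  have hx₀ : x ≠ 0 := by
    rintro rfl
    have h₀ := inner_eq_mul_of_hasSum_smul hz (l := 1) (by simpa using hx) 0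
    rw [inner_zero_right, Pi.one_apply, one_mul] at h₀
    exact hz₀ 0 (inner_self_eq_zero.1 h₀.symm)
  refine hH (hπ.finiteDimensional_of_vecFn_eq_zero hx₀ ?_)
  exact hA.eq_zero_of_singularR (isRepresentable_vecFn _ _) (isRepresentable_vecFn _ _)
    (isRepresentable_vecFn _ _) (absContR_vecFn_ellRep hy) (absContR_vecFn_add hy hx)
    (hπ.singularR_vecFn hz hz₀ hx)

end NonUniqueness

end

/-- **Main Theorem (Theorem 1.8 / Theorem 2.21)**: for a `⋆`-algebra `A`, the Lebesgue
decomposition of representable positive functionals over `A` is unique if and only if every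
topologically irreducible `⋆`-representation of `A` on a Hilbert space is finite
dimensional. -/
theorem lebesgue_unique_iff_topIrred_finiteDimensional
    (A : Type) [NonUnitalRing A] [Module ℂ A] [SMulCommClass ℂ A A]
    [IsScalarTower ℂ A A] [StarRing A] [StarModule ℂ A] :
    LebDecompUniqueR A ↔
      ∀ (H : Type) [NormedAddCommGroup H] [InnerProductSpace ℂ H] [CompleteSpace H]
        (π : A →⋆ₙₐ[ℂ] (H →L[ℂ] H)), IsTopIrredRep π → FiniteDimensional ℂ H :=
  ⟨fun hA _ _ _ _ _ hπ ↦ hπ.finiteDimensional_of_lebDecompUniqueR hA,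
    lebDecompUniqueR_of_finiteDimensional⟩
end

section
/- Let A_M = ∏_{n=1}^∞ M_n(ℂ) be the complete direct product *-algebra of the full matrix algebras. Every *-representation π of A_M on a complex Hilbert space has finite-dimensional range: there is a nonempty finite set F ⊆ ℕ⁺ such that π vanishes on every sequence (a_n)_n with a_n = 0 for all n ∈ F. In particular, every topologically irreducible representation of A_M is finite dimensional, and the Lebesgue decomposition of representable positive functionals over A_M is unique. -/
open scoped ComplexOrder InnerProductSpace

/-- The complete direct product `⋆`-algebra `A_M = ∏ₙ Mₙ(ℂ)` of all full matrix algebras,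
with coordinatewise operations and conjugate-transpose involution. -/
abbrev MatrixProdAlgebra : Type := (n : ℕ+) → Matrix (Fin n) (Fin n) ℂ

/-!
The scalar families `w : ι → ℂ` embed in the centre of a product of unital `⋆`-algebras, and the
bounded ones form the C⋆-algebra `ℓ^∞`, on which a `⋆`-homomorphism `φ` into a C⋆-algebra is
contractive. Take the unbounded family `c = (n)_n`, a number `k > ‖φ c‖`, the projection `p` onto
the coordinates `n ≥ k` and `d = p c⁻¹`. As `‖d‖ ≤ 1/k` and `p = c d`, we get `‖φ p‖ ≤ ‖φ c‖/k < 1`;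
so the idempotent `φ p` is zero and `φ` only sees the coordinates `n < k`.

Every GNS space is therefore finite dimensional. Let `N_f` be the kernel of the GNS map of `f`. If
`f ⊥ g`, then `N_f + N_g` is the whole algebra: compressing the GNS representation of `f` to the
orthogonal complement of the image of `N_g` gives a functional whose seminorm is bounded by
multiples of those of `f` and `g` (the latter by finite dimensionality), so it vanishes. In a
decomposition `f = f_r + f_s` with respect to `g`, the regular part vanishes on `N_g`, hence
`f_s = f` there, while `f_s = 0` on `N_{f_s}`. Two singular parts thus agree on the left ideal
`N_g`, whose sum with either of their kernels is everything; this forces the two kernels, and then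
the two singular parts, to coincide.
-/

section Factorization

variable {𝕜 V W : Type*} [AddCommGroup V] [AddCommGroup W]

theorem exists_comp_rangeRestrict_eq_of_ker_le_ker {W' : Type*} [AddCommGroup W'] [Field 𝕜]
    [Module 𝕜 V] [Module 𝕜 W] [Module 𝕜 W'] {S : V →ₗ[𝕜] W} {T : V →ₗ[𝕜] W'}
    (h : LinearMap.ker S ≤ LinearMap.ker T) :
    ∃ R : LinearMap.range S →ₗ[𝕜] W', R ∘ₗ S.rangeRestrict = T := by
  obtain ⟨g, hg⟩ := S.rangeRestrict.exists_rightInverse_of_surjective S.range_rangeRestrict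
  refine ⟨T ∘ₗ g, LinearMap.ext fun v => ?_⟩
  have hSg : S (g (S.rangeRestrict v)) = S v :=
    congrArg Subtype.val (LinearMap.congr_fun hg (S.rangeRestrict v))
  exact LinearMap.sub_mem_ker_iff.mp (h (LinearMap.sub_mem_ker_iff.mpr hSg))

theorem finiteDimensional_range_of_forall_eq_zero {ι : Type*} {M : ι → Type*} [Field 𝕜]
    [Module 𝕜 W] [∀ i, AddCommGroup (M i)] [∀ i, Module 𝕜 (M i)]
    [∀ i, FiniteDimensional 𝕜 (M i)] (T : (∀ i, M i) →ₗ[𝕜] W) (F : Finset ι)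
    (hT : ∀ a : ∀ i, M i, (∀ i ∈ F, a i = 0) → T a = 0) :
    FiniteDimensional 𝕜 (LinearMap.range T) := by
  let res : (∀ i, M i) →ₗ[𝕜] ∀ i : F, M i := LinearMap.pi fun i => LinearMap.proj (i : ι)
  have hker : LinearMap.ker res ≤ LinearMap.ker T :=
    fun a ha => hT a fun i hi => congrFun ha ⟨i, hi⟩
  obtain ⟨R, rfl⟩ := exists_comp_rangeRestrict_eq_of_ker_le_ker hker
  exact Submodule.finiteDimensional_of_le (LinearMap.range_comp_le_range _ R)

theorem exists_norm_le_mul_norm_of_ker_le_ker {E E' : Type*} [NontriviallyNormedField 𝕜]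
    [CompleteSpace 𝕜] [Module 𝕜 V] [NormedAddCommGroup E] [NormedSpace 𝕜 E]
    [NormedAddCommGroup E'] [NormedSpace 𝕜 E'] (S : V →ₗ[𝕜] E) (T : V →ₗ[𝕜] E')
    [FiniteDimensional 𝕜 (LinearMap.range S)] (h : LinearMap.ker S ≤ LinearMap.ker T) :
    ∃ C : ℝ, ∀ v, ‖T v‖ ≤ C * ‖S v‖ := by
  obtain ⟨R, rfl⟩ := exists_comp_rangeRestrict_eq_of_ker_le_ker h
  exact ⟨‖R.toContinuousLinearMap‖, fun v => R.toContinuousLinearMap.le_opNorm (S.rangeRestrict v)⟩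

end Factorization

section BoundedScalars

variable {ι B : Type*} [NonUnitalCStarAlgebra B]

theorem norm_map_le_of_forall_norm_le (ψ : (ι → ℂ) →⋆ₙₐ[ℂ] B) {w : ι → ℂ} {C : ℝ} (hC : 0 ≤ C)
    (hw : ∀ i, ‖w i‖ ≤ C) : ‖ψ w‖ ≤ C := by
  let incl : lp (fun _ : ι => ℂ) ⊤ →⋆ₙₐ[ℂ] (ι → ℂ) :=
    { toFun := fun v => v
      map_smul' := fun _ _ => rfl
      map_zero' := rfl
      map_add' := fun _ _ => rfl
      map_mul' := fun _ _ => rfl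
      map_star' := fun _ => rfl }
  let v : lp (fun _ : ι => ℂ) ⊤ := ⟨w, memℓp_infty ⟨C, by rintro _ ⟨i, rfl⟩; exact hw i⟩⟩
  calc ‖ψ w‖ = ‖(ψ.comp incl) v‖ := rfl
    _ ≤ ‖v‖ := NonUnitalStarAlgHom.norm_apply_le _ v
    _ ≤ C := lp.norm_le_of_forall_le hC hw

theorem eq_zero_of_isIdempotentElem_of_norm_lt_one {R : Type*} [NonUnitalNormedRing R] {q : R}
    (hq : IsIdempotentElem q) (hlt : ‖q‖ < 1) : q = 0 := by
  by_contra hne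
  have hle : ‖q‖ ≤ ‖q‖ * ‖q‖ := by simpa only [hq.eq] using norm_mul_le q q
  exact hlt.not_ge (le_of_mul_le_mul_right (by simpa using hle) (norm_pos_iff.mpr hne))

theorem exists_finset_map_indicator_compl_eq_zero [Countable ι] (ψ : (ι → ℂ) →⋆ₙₐ[ℂ] B) :
    ∃ F : Finset ι, ψ ((F : Set ι)ᶜ.indicator 1) = 0 := by
  obtain ⟨e, he⟩ := exists_injective_nat ι
  let c : ι → ℂ := fun i => e i
  obtain ⟨k, hk⟩ := exists_nat_gt ‖ψ c‖
  have hk0 : (0 : ℝ) < k := (norm_nonneg _).trans_lt hk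
  let F : Finset ι := (Finset.range k).preimage e he.injOn
  have hF : ∀ i, i ∉ F → k ≤ e i := fun i hi => by simpa [F] using hi
  let p : ι → ℂ := (F : Set ι)ᶜ.indicator 1
  let d : ι → ℂ := (F : Set ι)ᶜ.indicator c⁻¹
  have hd : ∀ i, ‖d i‖ ≤ (k : ℝ)⁻¹ := by
    intro i
    by_cases hi : i ∈ F
    · simp [d, hi]
    · simpa [d, c, hi] using inv_anti₀ hk0 (by exact_mod_cast hF i hi)
  have hcd : c * d = p := by
    funext i
    by_cases hi : i ∈ F
    · simp [d, p, hi]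
    · have : e i ≠ 0 := ((Nat.cast_pos.mp hk0).trans_le (hF i hi)).ne'
      simp [d, p, c, hi, this]
  have hpp : IsIdempotentElem p := by
    funext i
    by_cases hi : i ∈ F <;> simp [p, hi]
  refine ⟨F, eq_zero_of_isIdempotentElem_of_norm_lt_one (hpp.map ψ) ?_⟩
  calc ‖ψ p‖ = ‖ψ c * ψ d‖ := by rw [← map_mul, hcd]
    _ ≤ ‖ψ c‖ * ‖ψ d‖ := norm_mul_le _ _
    _ ≤ ‖ψ c‖ * (k : ℝ)⁻¹ := by
        gcongr
        exact norm_map_le_of_forall_norm_le ψ (by positivity) hd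
    _ < 1 := by rwa [← div_eq_mul_inv, div_lt_one hk0]

variable {A : ι → Type*} [∀ i, Ring (A i)] [∀ i, StarRing (A i)] [∀ i, Algebra ℂ (A i)]
  [∀ i, StarModule ℂ (A i)]

variable (A) in
/-- The central embedding of the scalar families into a product of unital `⋆`-algebras,
`w ↦ (wᵢ • 1)ᵢ`. -/
def scalarFamily : (ι → ℂ) →⋆ₙₐ[ℂ] (∀ i, A i) where
  toFun w i := algebraMap ℂ (A i) (w i)
  map_smul' c w := by funext i; simp [Algebra.smul_def]
  map_zero' := by funext i; simp
  map_add' v w := by funext i; simp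
  map_mul' v w := by funext i; simp
  map_star' w := by funext i; exact algebraMap_star_comm (w i)

theorem exists_finset_forall_map_eq_zero [Countable ι] (φ : (∀ i, A i) →⋆ₙₐ[ℂ] B) :
    ∃ F : Finset ι, ∀ a : ∀ i, A i, (∀ i ∈ F, a i = 0) → φ a = 0 := by
  obtain ⟨F, hF⟩ := exists_finset_map_indicator_compl_eq_zero (φ.comp (scalarFamily A))
  refine ⟨F, fun a ha => ?_⟩
  have hpa : scalarFamily A ((F : Set ι)ᶜ.indicator 1) * a = a := by
    funext i
    by_cases hi : i ∈ F <;> simp [scalarFamily, hi, ha]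
  rw [← hpa, map_mul, ← NonUnitalStarAlgHom.comp_apply, hF, zero_mul]

theorem finiteDimensional_range_of_pi [Countable ι] [∀ i, FiniteDimensional ℂ (A i)]
    (φ : (∀ i, A i) →⋆ₙₐ[ℂ] B) :
    FiniteDimensional ℂ (LinearMap.range (φ : (∀ i, A i) →ₗ[ℂ] B)) := by
  obtain ⟨F, hF⟩ := exists_finset_forall_map_eq_zero φ
  exact finiteDimensional_range_of_forall_eq_zero _ F hF

end BoundedScalars

section Representations

variable {A : Type*} [NonUnitalRing A] [Module ℂ A] [StarRing A]
  {H : Type*} [NormedAddCommGroup H] [InnerProductSpace ℂ H] [CompleteSpace H]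
  (π : A →⋆ₙₐ[ℂ] (H →L[ℂ] H))

/-- The map `a ↦ π(a)ξ` along the orbit of a vector `ξ` under a representation `π`; `ξ` is cyclic
when it has dense range. -/
noncomputable def orbitMap (ξ : H) : A →ₗ[ℂ] H :=
  (ContinuousLinearMap.apply ℂ H ξ : (H →L[ℂ] H) →ₗ[ℂ] H) ∘ₗ (π : A →ₗ[ℂ] (H →L[ℂ] H))

@[simp]
theorem orbitMap_apply (ξ : H) (a : A) : orbitMap π ξ a = π a ξ := rfl

theorem orbitMap_smul (z : ℂ) (ξ : H) : orbitMap π (z • ξ) = z • orbitMap π ξ := by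
  ext a
  simp

variable {π} in
theorem denseRange_orbitMap_smul {z : ℂ} {ξ : H} (hz : z ≠ 0) (hξ : DenseRange (orbitMap π ξ)) :
    DenseRange (orbitMap π (z • ξ)) := by
  rw [orbitMap_smul]
  exact (MulAction.surjective₀ hz).denseRange.comp hξ (continuous_const_smul z)

theorem finiteDimensional_range_orbitMap
    [FiniteDimensional ℂ (LinearMap.range (π : A →ₗ[ℂ] (H →L[ℂ] H)))] (ξ : H) :
    FiniteDimensional ℂ (LinearMap.range (orbitMap π ξ)) := by
  rw [orbitMap, LinearMap.range_comp]
  infer_instance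

theorem inner_map_star_right (a : A) (x y : H) : ⟪x, π (star a) y⟫_ℂ = ⟪π a x, y⟫_ℂ := by
  rw [map_star, ContinuousLinearMap.star_eq_adjoint, ContinuousLinearMap.adjoint_inner_right]

variable {π} in
theorem map_mem_orthogonal {K : Submodule ℂ H} (hK : ∀ a, ∀ x ∈ K, π a x ∈ K) (a : A) {x : H}
    (hx : x ∈ Kᗮ) : π a x ∈ Kᗮ := by
  intro y hy
  rw [← star_star a, inner_map_star_right]
  exact hx _ (hK _ y hy)

variable {π} in
/-- The subrepresentation of `π` on a closed invariant subspace `K`, encoded as the compression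
`P_K π(a)|_K`. -/
noncomputable def subrepresentation (K : Submodule ℂ H) [CompleteSpace K]
    (hK : ∀ a, ∀ x ∈ K, π a x ∈ K) : A →⋆ₙₐ[ℂ] (K →L[ℂ] K) where
  toFun a := K.orthogonalProjectionOnto ∘L π a ∘L K.subtypeL
  map_smul' c a := by ext x; simp
  map_zero' := by ext x; simp
  map_add' a b := by ext x; simp
  map_mul' a b := by
    ext x
    simp [Submodule.starProjection_eq_self_iff.mpr (hK b x x.2)]
  map_star' a := by
    rw [ContinuousLinearMap.star_eq_adjoint, ContinuousLinearMap.adjoint_comp,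
      ContinuousLinearMap.adjoint_comp, Submodule.adjoint_subtypeL,
      Submodule.adjoint_orthogonalProjectionOnto, map_star, ContinuousLinearMap.star_eq_adjoint,
      ContinuousLinearMap.comp_assoc]

variable {π} in
theorem orbitMap_subrepresentation (K : Submodule ℂ H) [CompleteSpace K]
    (hK : ∀ a, ∀ x ∈ K, π a x ∈ K) (ξ : H) (a : A) :
    orbitMap (subrepresentation K hK) (K.orthogonalProjectionOnto ξ) a =
      K.orthogonalProjectionOnto (orbitMap π ξ a) := by
  have hmem : π a (ξ - K.starProjection ξ) ∈ Kᗮ :=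
    map_mem_orthogonal hK a (K.sub_starProjection_mem_orthogonal ξ)
  have hzero := Submodule.orthogonalProjectionOnto_apply_of_mem_orthogonal hmem
  rw [map_sub, map_sub, sub_eq_zero] at hzero
  exact hzero.symm

variable {π} in
theorem denseRange_orbitMap_subrepresentation (K : Submodule ℂ H) [CompleteSpace K]
    (hK : ∀ a, ∀ x ∈ K, π a x ∈ K) {ξ : H} (hξ : DenseRange (orbitMap π ξ)) :
    DenseRange (orbitMap (subrepresentation K hK) (K.orthogonalProjectionOnto ξ)) := by
  have hsurj : Function.Surjective K.orthogonalProjectionOnto := fun x =>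
    ⟨x, K.orthogonalProjectionOnto_mem_subspace_eq_self x⟩
  have hcomp : ⇑(orbitMap (subrepresentation K hK) (K.orthogonalProjectionOnto ξ)) =
      K.orthogonalProjectionOnto ∘ orbitMap π ξ := funext (orbitMap_subrepresentation K hK ξ)
  rw [hcomp]
  exact hsurj.denseRange.comp hξ K.orthogonalProjectionOnto.continuous

/-- The vector functional `a ↦ ⟪ξ, π(a)ξ⟫`. -/
noncomputable def vectorFunctional (ξ : H) : A →ₗ[ℂ] ℂ :=
  (innerSL ℂ ξ : H →ₗ[ℂ] ℂ) ∘ₗ orbitMap π ξ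

theorem vectorFunctional_star_mul (ξ : H) (a b : A) :
    vectorFunctional π ξ (star b * a) = ⟪orbitMap π ξ b, orbitMap π ξ a⟫_ℂ := by
  simp [vectorFunctional, ← inner_map_star_right]

theorem vectorFunctional_star_mul_self (ξ : H) (a : A) :
    vectorFunctional π ξ (star a * a) = ((‖orbitMap π ξ a‖ ^ 2 : ℝ) : ℂ) := by
  rw [vectorFunctional_star_mul, inner_self_eq_norm_sq_to_K]
  norm_cast

theorem vectorFunctional_star (ξ : H) (a : A) :
    vectorFunctional π ξ (star a) = star (vectorFunctional π ξ a) := by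
  simp [vectorFunctional, ContinuousLinearMap.star_eq_adjoint, map_star,
    ContinuousLinearMap.adjoint_inner_right]

end Representations

section GelfandIdeal

variable {A : Type*} [NonUnitalRing A] [Module ℂ A] [SMulCommClass ℂ A A] [IsScalarTower ℂ A A]

/-- The Gelfand ideal `N_f = {a | ∀ b, f (b * a) = 0}` of a functional `f`: the kernel of the GNS
map when `f` is representable. This form makes it a left ideal for every linear `f`. -/
def gelfandIdeal (f : A →ₗ[ℂ] ℂ) : Submodule ℂ A :=
  LinearMap.ker ((LinearMap.mul ℂ A).compr₂ f).flip

theorem mem_gelfandIdeal {f : A →ₗ[ℂ] ℂ} {a : A} : a ∈ gelfandIdeal f ↔ ∀ b, f (b * a) = 0 := by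
  simp [gelfandIdeal, LinearMap.ext_iff]

theorem mul_mem_gelfandIdeal {f : A →ₗ[ℂ] ℂ} {a : A} (b : A) (ha : a ∈ gelfandIdeal f) :
    b * a ∈ gelfandIdeal f := by
  rw [mem_gelfandIdeal] at ha ⊢
  intro c
  rw [← mul_assoc]
  exact ha (c * b)

variable [StarRing A] {H : Type*} [NormedAddCommGroup H] [InnerProductSpace ℂ H] [CompleteSpace H]
  (π : A →⋆ₙₐ[ℂ] (H →L[ℂ] H))

theorem gelfandIdeal_vectorFunctional (ξ : H) :
    gelfandIdeal (vectorFunctional π ξ) = LinearMap.ker (orbitMap π ξ) := by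
  ext a
  rw [mem_gelfandIdeal, LinearMap.mem_ker]
  refine ⟨fun h => ?_, fun h b => ?_⟩
  · rw [← inner_self_eq_zero (𝕜 := ℂ), ← vectorFunctional_star_mul, h]
  · rw [← star_star b, vectorFunctional_star_mul, h, inner_zero_right]

theorem finiteDimensional_quotient_gelfandIdeal_iff (ξ : H) :
    FiniteDimensional ℂ (A ⧸ gelfandIdeal (vectorFunctional π ξ)) ↔
      FiniteDimensional ℂ (LinearMap.range (orbitMap π ξ)) := by
  rw [gelfandIdeal_vectorFunctional]
  exact Module.Finite.equiv_iff (orbitMap π ξ).quotKerEquivRange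

end GelfandIdeal

section Lebesgue

variable {A : Type} [NonUnitalRing A] [Module ℂ A] [StarRing A] {f g : A →ₗ[ℂ] ℂ}

theorem fnLE_add_left (hf : IsPosFn f) : FnLE g (f + g) := by
  rwa [FnLE, add_sub_cancel_right]

theorem IsRepresentable.exists_eq_vectorFunctional (hf : IsRepresentable f) :
    ∃ (H : Type) (_ : NormedAddCommGroup H) (_ : InnerProductSpace ℂ H) (_ : CompleteSpace H)
      (π : A →⋆ₙₐ[ℂ] (H →L[ℂ] H)) (ξ : H),
      DenseRange (orbitMap π ξ) ∧ f = vectorFunctional π ξ := by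
  obtain ⟨H, _, _, _, π, ξ, hξ, hf⟩ := hf
  exact ⟨H, _, _, _, π, ξ, hξ, LinearMap.ext hf⟩

theorem IsRepresentable.map_star (hf : IsRepresentable f) (a : A) : f (star a) = star (f a) := by
  obtain ⟨H, _, _, _, π, ξ, -, rfl⟩ := hf.exists_eq_vectorFunctional
  exact vectorFunctional_star π ξ a

variable {H K L : Type} [NormedAddCommGroup H] [InnerProductSpace ℂ H] [CompleteSpace H]
  [NormedAddCommGroup K] [InnerProductSpace ℂ K] [CompleteSpace K]
  [NormedAddCommGroup L] [InnerProductSpace ℂ L] [CompleteSpace L]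
  {π : A →⋆ₙₐ[ℂ] (H →L[ℂ] H)} {ρ : A →⋆ₙₐ[ℂ] (K →L[ℂ] K)} {σ : A →⋆ₙₐ[ℂ] (L →L[ℂ] L)}
  {ξ : H} {η : K} {ζ : L}

theorem isPosFn_vectorFunctional : IsPosFn (vectorFunctional π ξ) := fun a => by
  rw [vectorFunctional_star_mul_self]
  exact Complex.zero_le_real.mpr (sq_nonneg _)

theorem isRepresentable_vectorFunctional (hξ : DenseRange (orbitMap π ξ)) :
    IsRepresentable (vectorFunctional π ξ) :=
  ⟨H, _, _, _, π, ξ, hξ, fun _ => rfl⟩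

theorem fnLE_vectorFunctional (h : ∀ a, ‖orbitMap π ξ a‖ ≤ ‖orbitMap ρ η a‖) :
    FnLE (vectorFunctional π ξ) (vectorFunctional ρ η) := fun a => by
  rw [LinearMap.sub_apply, vectorFunctional_star_mul_self, vectorFunctional_star_mul_self,
    sub_nonneg, Complex.real_le_real]
  gcongr
  exact h a

variable [SMulCommClass ℂ A A] [IsScalarTower ℂ A A]

theorem SingularR.orbitMap_eq_zero
    (h : SingularR (vectorFunctional π ξ) (vectorFunctional ρ η))
    (hζ : DenseRange (orbitMap σ ζ)) {C D : ℝ}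
    (hC : ∀ a, ‖orbitMap σ ζ a‖ ≤ C * ‖orbitMap π ξ a‖)
    (hD : ∀ a, ‖orbitMap σ ζ a‖ ≤ D * ‖orbitMap ρ η a‖) : orbitMap σ ζ = 0 := by
  let M : ℝ := max 1 (max C D)
  have hM : 0 < M := lt_max_of_lt_left one_pos
  have hz : ((M⁻¹ : ℝ) : ℂ) ≠ 0 := by exact_mod_cast (inv_pos.mpr hM).ne'
  have scaled_le {t c r : ℝ} (ht : 0 ≤ t) (hr : r ≤ c * t) (hc : c ≤ M) : M⁻¹ * r ≤ t :=
    (inv_mul_le_iff₀ hM).mpr (hr.trans (mul_le_mul_of_nonneg_right hc ht))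
  have hnorm : ∀ a, ‖orbitMap σ (((M⁻¹ : ℝ) : ℂ) • ζ) a‖ = M⁻¹ * ‖orbitMap σ ζ a‖ := fun a => by
    rw [orbitMap_smul, LinearMap.smul_apply, norm_smul, Complex.norm_real,
      Real.norm_of_nonneg (inv_pos.mpr hM).le]
  have hzero : vectorFunctional σ (((M⁻¹ : ℝ) : ℂ) • ζ) = 0 := by
    have hdense := denseRange_orbitMap_smul hz hζ
    refine h _ (isRepresentable_vectorFunctional hdense) isPosFn_vectorFunctional
      (fnLE_vectorFunctional fun a => ?_) (fnLE_vectorFunctional fun a => ?_)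
    · rw [hnorm]
      exact scaled_le (norm_nonneg _) (hC a) (by simp [M])
    · rw [hnorm]
      exact scaled_le (norm_nonneg _) (hD a) (by simp [M])
  have hker : LinearMap.ker (orbitMap σ (((M⁻¹ : ℝ) : ℂ) • ζ)) = ⊤ := by
    rw [← gelfandIdeal_vectorFunctional, hzero, eq_top_iff]
    exact fun a _ => mem_gelfandIdeal.mpr fun b => rfl
  rwa [orbitMap_smul, LinearMap.ker_smul _ _ hz, LinearMap.ker_eq_top] at hker

theorem SingularR.range_orbitMap_le_topologicalClosure
    (h : SingularR (vectorFunctional π ξ) (vectorFunctional ρ η)) (hξ : DenseRange (orbitMap π ξ))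
    [FiniteDimensional ℂ (LinearMap.range (orbitMap ρ η))] :
    LinearMap.range (orbitMap π ξ) ≤
      ((LinearMap.ker (orbitMap ρ η)).map (orbitMap π ξ)).topologicalClosure := by
  let W : Submodule ℂ H := (LinearMap.ker (orbitMap ρ η)).map (orbitMap π ξ)
  have hW : ∀ a, ∀ x ∈ W, π a x ∈ W := by
    rintro a _ ⟨b, hb, rfl⟩
    rw [← gelfandIdeal_vectorFunctional] at hb
    refine ⟨a * b, ?_, by simp⟩
    rw [← gelfandIdeal_vectorFunctional]
    exact mul_mem_gelfandIdeal a hb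
  have hWperp : ∀ a, ∀ x ∈ Wᗮ, π a x ∈ Wᗮ := fun a x => map_mem_orthogonal hW a
  have happly := orbitMap_subrepresentation Wᗮ hWperp ξ
  have hker : LinearMap.ker (orbitMap ρ η) ≤
      LinearMap.ker (orbitMap (subrepresentation Wᗮ hWperp) (Wᗮ.orthogonalProjectionOnto ξ)) := by
    intro a ha
    rw [LinearMap.mem_ker, happly]
    exact Submodule.orthogonalProjectionOnto_orthogonal_apply_eq_zero
      (Submodule.mem_map_of_mem ha)
  obtain ⟨D, hD⟩ := exists_norm_le_mul_norm_of_ker_le_ker _ _ hker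
  have hzero := h.orbitMap_eq_zero (denseRange_orbitMap_subrepresentation Wᗮ hWperp hξ) (C := 1)
    (fun a => by
      rw [happly, one_mul]
      exact Wᗮ.norm_orthogonalProjectionOnto_apply_le _) hD
  rintro _ ⟨a, rfl⟩
  rw [← Submodule.orthogonal_orthogonal_eq_closure,
    ← Submodule.orthogonalProjectionOnto_eq_zero_iff, ← happly, hzero, LinearMap.zero_apply]

theorem IsRepresentable.apply_eq_zero_of_mem_gelfandIdeal (hf : IsRepresentable f) {a : A}
    (ha : a ∈ gelfandIdeal f) : f a = 0 := by
  obtain ⟨H, _, _, _, π, ξ, -, rfl⟩ := hf.exists_eq_vectorFunctional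
  rw [gelfandIdeal_vectorFunctional, LinearMap.mem_ker] at ha
  rw [vectorFunctional, LinearMap.comp_apply, ha, map_zero]

theorem IsRepresentable.mem_gelfandIdeal_of_star_mul_self (hf : IsRepresentable f) {a : A}
    (ha : f (star a * a) = 0) : a ∈ gelfandIdeal f := by
  obtain ⟨H, _, _, _, π, ξ, -, rfl⟩ := hf.exists_eq_vectorFunctional
  rwa [vectorFunctional_star_mul, inner_self_eq_zero, ← LinearMap.mem_ker,
    ← gelfandIdeal_vectorFunctional] at ha

theorem FnLE.gelfandIdeal_le (h : FnLE f g) (hpos : IsPosFn f) (hf : IsRepresentable f) :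
    gelfandIdeal g ≤ gelfandIdeal f := by
  intro a ha
  have hle : 0 ≤ g (star a * a) - f (star a * a) := h a
  rw [mem_gelfandIdeal.mp ha, zero_sub, neg_nonneg] at hle
  exact hf.mem_gelfandIdeal_of_star_mul_self (hle.antisymm (hpos a))

theorem AbsContR.gelfandIdeal_le (h : AbsContR f g) : gelfandIdeal g ≤ gelfandIdeal f := by
  obtain ⟨fn, α, hfn, -, -, hle, hlim⟩ := h
  intro a ha
  have hsmul : ∀ n, a ∈ gelfandIdeal ((α n : ℂ) • g) := fun n =>
    mem_gelfandIdeal.mpr fun b => by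
      rw [LinearMap.smul_apply, mem_gelfandIdeal.mp ha, smul_zero]
  have hzero : ∀ n b, fn n (b * a) = 0 := fun n =>
    mem_gelfandIdeal.mp ((hle n).gelfandIdeal_le (hfn n).2 (hfn n).1 (hsmul n))
  refine mem_gelfandIdeal.mpr fun b => tendsto_nhds_unique (hlim (b * a)) ?_
  simp only [hzero, tendsto_const_nhds]

theorem SingularR.gelfandIdeal_sup_eq_top (h : SingularR f g) (hf : IsRepresentable f)
    (hg : IsRepresentable g) [FiniteDimensional ℂ (A ⧸ gelfandIdeal f)]
    [FiniteDimensional ℂ (A ⧸ gelfandIdeal g)] : gelfandIdeal f ⊔ gelfandIdeal g = ⊤ := by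
  obtain ⟨H, _, _, _, π, ξ, hξ, rfl⟩ := hf.exists_eq_vectorFunctional
  obtain ⟨K, _, _, _, ρ, η, -, rfl⟩ := hg.exists_eq_vectorFunctional
  have := (finiteDimensional_quotient_gelfandIdeal_iff π ξ).mp inferInstance
  have := (finiteDimensional_quotient_gelfandIdeal_iff ρ η).mp inferInstance
  rw [gelfandIdeal_vectorFunctional, gelfandIdeal_vectorFunctional]
  have hle := h.range_orbitMap_le_topologicalClosure hξ
  have : FiniteDimensional ℂ ((LinearMap.ker (orbitMap ρ η)).map (orbitMap π ξ)) :=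
    Submodule.finiteDimensional_of_le LinearMap.map_le_range
  rw [(Submodule.closed_of_finiteDimensional _).submodule_topologicalClosure_eq,
    LinearMap.range_eq_map, LinearMap.map_le_map_iff, sup_comm] at hle
  exact top_le_iff.mp hle

theorem gelfandIdeal_le_of_eqOn {J : Submodule ℂ A} (hf : IsRepresentable f)
    (hg : IsRepresentable g) (hJ : ∀ b, ∀ k ∈ J, b * k ∈ J) (hsup : gelfandIdeal g ⊔ J = ⊤)
    (heq : Set.EqOn f g J) : gelfandIdeal f ≤ gelfandIdeal g := by
  intro x hx
  refine mem_gelfandIdeal.mpr fun b => ?_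
  -- `J` and the Gelfand ideals are only left ideals, so we split `star b` and conjugate.
  obtain ⟨u, hu, k, hk, hb⟩ := Submodule.mem_sup.mp (hsup ▸ Submodule.mem_top : star b ∈ _ ⊔ J)
  have hgu : g (star x * u) = 0 := mem_gelfandIdeal.mp hu _
  have hgk : g (star x * k) = 0 := by
    rw [← heq (hJ _ k hk), ← star_star (star x * k), hf.map_star, star_mul, star_star,
      mem_gelfandIdeal.mp hx, star_zero]
  rw [← star_star (b * x), hg.map_star, star_mul, ← hb, mul_add, map_add, hgu, hgk, add_zero,
    star_zero]

theorem IsRepresentable.eq_of_eqOn {J : Submodule ℂ A} (hf : IsRepresentable f)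
    (hg : IsRepresentable g) (hJ : ∀ b, ∀ k ∈ J, b * k ∈ J) (hsupf : gelfandIdeal f ⊔ J = ⊤)
    (hsupg : gelfandIdeal g ⊔ J = ⊤) (heq : Set.EqOn f g J) : f = g := by
  ext x
  obtain ⟨u, hu, k, hk, rfl⟩ := Submodule.mem_sup.mp (hsupf ▸ Submodule.mem_top : x ∈ _ ⊔ J)
  have hgu := hg.apply_eq_zero_of_mem_gelfandIdeal (gelfandIdeal_le_of_eqOn hf hg hJ hsupg heq hu)
  rw [map_add, map_add, hf.apply_eq_zero_of_mem_gelfandIdeal hu, hgu, heq hk]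

theorem lebDecompUniqueForR_of_finiteDimensional (hg : IsRepresentable g)
    [FiniteDimensional ℂ (A ⧸ gelfandIdeal f)] [FiniteDimensional ℂ (A ⧸ gelfandIdeal g)] :
    LebDecompUniqueForR f g := by
  have hsup : ∀ {r s : A →ₗ[ℂ] ℂ}, IsLebDecompR f g r s → gelfandIdeal s ⊔ gelfandIdeal g = ⊤ := by
    rintro r s ⟨-, hr, hs, hspos, rfl, -, hsing⟩
    have hle : gelfandIdeal (r + s) ≤ gelfandIdeal s := (fnLE_add_left hr).gelfandIdeal_le hspos hs
    have : FiniteDimensional ℂ (A ⧸ gelfandIdeal s) :=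
      Module.Finite.of_surjective _ (Submodule.factor_surjective hle)
    exact hsing.gelfandIdeal_sup_eq_top hs hg
  have heqOn : ∀ {r s : A →ₗ[ℂ] ℂ}, IsLebDecompR f g r s → Set.EqOn s f (gelfandIdeal g) := by
    rintro r s ⟨hr, -, -, -, rfl, hac, -⟩ k hk
    have hrk : r k = 0 := hr.apply_eq_zero_of_mem_gelfandIdeal (hac.gelfandIdeal_le hk)
    rw [LinearMap.add_apply, hrk, zero_add]
  intro r s r' s' h h'
  have hs : s = s' := h.2.2.1.eq_of_eqOn h'.2.2.1 (fun b _ => mul_mem_gelfandIdeal b)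
    (hsup h) (hsup h') ((heqOn h).trans (heqOn h').symm)
  have hsum : r + s = r' + s := by rw [← h.2.2.2.2.1, hs, ← h'.2.2.2.2.1]
  exact ⟨add_right_cancel hsum, hs⟩

theorem IsRepresentable.finiteDimensional_quotient_gelfandIdeal (hf : IsRepresentable f)
    (h : ∀ (H : Type) [NormedAddCommGroup H] [InnerProductSpace ℂ H] [CompleteSpace H]
      (π : A →⋆ₙₐ[ℂ] (H →L[ℂ] H)),
      FiniteDimensional ℂ (LinearMap.range (π : A →ₗ[ℂ] (H →L[ℂ] H)))) :
    FiniteDimensional ℂ (A ⧸ gelfandIdeal f) := by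
  obtain ⟨H, _, _, _, π, ξ, -, rfl⟩ := hf.exists_eq_vectorFunctional
  have := h H π
  exact (finiteDimensional_quotient_gelfandIdeal_iff π ξ).mpr (finiteDimensional_range_orbitMap π ξ)

theorem lebDecompUniqueR_of_finiteDimensional_range [StarModule ℂ A]
    (h : ∀ (H : Type) [NormedAddCommGroup H] [InnerProductSpace ℂ H] [CompleteSpace H]
      (π : A →⋆ₙₐ[ℂ] (H →L[ℂ] H)),
      FiniteDimensional ℂ (LinearMap.range (π : A →ₗ[ℂ] (H →L[ℂ] H)))) :
    LebDecompUniqueR A := by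
  intro f g hf _ hg _
  have := hf.finiteDimensional_quotient_gelfandIdeal h
  have := hg.finiteDimensional_quotient_gelfandIdeal h
  exact lebDecompUniqueForR_of_finiteDimensional hg

end Lebesgue

theorem IsTopIrredRep.finiteDimensional {A : Type} [NonUnitalRing A] [Module ℂ A] [StarRing A]
    {H : Type} [NormedAddCommGroup H] [InnerProductSpace ℂ H] [CompleteSpace H]
    {π : A →⋆ₙₐ[ℂ] (H →L[ℂ] H)} (hπ : IsTopIrredRep π)
    [FiniteDimensional ℂ (LinearMap.range (π : A →ₗ[ℂ] (H →L[ℂ] H)))] :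
    FiniteDimensional ℂ H := by
  obtain ⟨_, hirred⟩ := hπ
  obtain ⟨x, hx⟩ := exists_ne (0 : H)
  have := finiteDimensional_range_orbitMap π x
  let S : Submodule ℂ H := Submodule.span ℂ {x} ⊔ LinearMap.range (orbitMap π x)
  have hxS : x ∈ S := Submodule.mem_sup_left (Submodule.mem_span_singleton_self x)
  have hS : ∀ a, ∀ y ∈ S, π a y ∈ S := by
    intro a y hy
    obtain ⟨u, hu, _, ⟨b, rfl⟩, rfl⟩ := Submodule.mem_sup.mp hy
    obtain ⟨t, rfl⟩ := Submodule.mem_span_singleton.mp hu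
    exact Submodule.mem_sup_right ⟨t • a + a * b, by simp⟩
  rcases hirred S (Submodule.closed_of_finiteDimensional S) hS with hbot | htop
  · exact absurd ((Submodule.mem_bot ℂ).mp (hbot ▸ hxS)) hx
  · exact ((LinearEquiv.ofEq S ⊤ htop).trans Submodule.topEquiv).finiteDimensional

theorem matrixProdAlgebra_representations_general {ι : Type} [Countable ι] [Nonempty ι]
    {A : ι → Type} [∀ i, Ring (A i)] [∀ i, StarRing (A i)] [∀ i, Algebra ℂ (A i)]
    [∀ i, StarModule ℂ (A i)] [∀ i, FiniteDimensional ℂ (A i)] :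
    (∀ (H : Type) [NormedAddCommGroup H] [InnerProductSpace ℂ H] [CompleteSpace H]
        (π : (∀ i, A i) →⋆ₙₐ[ℂ] (H →L[ℂ] H)),
        ∃ F : Finset ι, F.Nonempty ∧ ∀ a : ∀ i, A i, (∀ i ∈ F, a i = 0) → π a = 0) ∧
      (∀ (H : Type) [NormedAddCommGroup H] [InnerProductSpace ℂ H] [CompleteSpace H]
        (π : (∀ i, A i) →⋆ₙₐ[ℂ] (H →L[ℂ] H)), IsTopIrredRep π → FiniteDimensional ℂ H) ∧
      LebDecompUniqueR (∀ i, A i) := by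
  classical
  refine ⟨fun H _ _ _ π => ?_, fun H _ _ _ π hπ => ?_, ?_⟩
  · obtain ⟨F, hF⟩ := exists_finset_forall_map_eq_zero π
    exact ⟨insert (Classical.arbitrary ι) F, F.insert_nonempty _,
      fun a ha => hF a fun i hi => ha i (Finset.mem_insert_of_mem hi)⟩
  · have := finiteDimensional_range_of_pi π
    exact hπ.finiteDimensional
  · exact lebDecompUniqueR_of_finiteDimensional_range fun _ _ _ _ => finiteDimensional_range_of_pi

/-- **Example 3.3**: every `⋆`-representation of `A_M = ∏ₙ Mₙ(ℂ)` on a Hilbert space kills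
all coordinates outside some nonempty finite set `F ⊆ ℕ⁺`; in particular every topologically
irreducible representation of `A_M` is finite dimensional, and the Lebesgue decomposition of
representable positive functionals over `A_M` is unique. -/
theorem matrixProdAlgebra_representations
    : (∀ (H : Type) [NormedAddCommGroup H] [InnerProductSpace ℂ H] [CompleteSpace H]
        (π : MatrixProdAlgebra →⋆ₙₐ[ℂ] (H →L[ℂ] H)),
        ∃ F : Finset ℕ+, F.Nonempty ∧
          ∀ a : MatrixProdAlgebra, (∀ n ∈ F, a n = 0) → π a = 0) ∧
      (∀ (H : Type) [NormedAddCommGroup H] [InnerProductSpace ℂ H] [CompleteSpace H]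
        (π : MatrixProdAlgebra →⋆ₙₐ[ℂ] (H →L[ℂ] H)),
        IsTopIrredRep π → FiniteDimensional ℂ H) ∧
      LebDecompUniqueR MatrixProdAlgebra :=
  matrixProdAlgebra_representations_general
end
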